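/- arXiv:0906.2729 — 3 statements merged into one kernel-verified Lean document; each statement's English description precedes it below -/
import Mathlib

section
/- Let L = (α_{kj})_{1≤k,j≤n} be an n×n integer matrix with det L ≠ 0, let a = (a₁,…,a_n) ∈ (ℂ*)ⁿ, and let f(z) = 1 + Σ_{k=1}^n a_k ∏_{j=1}^n z_j^{α_{kj}}, whose Newton polytope Δ_f is the simplex with vertices 0, α₁, …, α_n (the rows of L). Then the number of connected components of the complement in the torus Tⁿ = (ℝ/2πℤ)ⁿ of the closure of the coamoeba of V_f equals |det L| = n! · Vol(Δ_f). (Lemma 3.3(ii).) -/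
open Complex
open scoped ENNReal

/-!
On the universal cover `ℝⁿ` of the torus, the coamoeba of `f` is the preimage of the coamoeba of the
hyperplane `1 + ∑ k, w k = 0` under the affine map `x ↦ arg a + L x`. The closure of the latter
misses exactly the angles `y` which, modulo `2πℤⁿ`, admit a half-plane containing `1` and all
`exp (i y k)`; these form the `2πℤⁿ`-translates of one open convex cell. A deck transformation by
`2πl` moves the cell of index `m` to that of index `m + L l`, so the components in the torus are
indexed by `ℤⁿ / Lℤⁿ`, a group of order `|det L|`. The Newton polytope is a linear image of the
standard simplex, whose volume is `1 / n!`.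
-/

section SolidSimplex

open MeasureTheory

variable {ι : Type*}

/-- The corner of the nonnegative orthant cut off by the hyperplane `∑ i, x i = r`: the simplex with
vertices `0` and the `r`-multiples of the standard basis vectors (empty for `r < 0`). -/
def solidSimplex (ι : Type*) [Fintype ι] (r : ℝ) : Set (ι → ℝ) :=
  {x | (∀ i, 0 ≤ x i) ∧ ∑ i, x i ≤ r}

variable [Fintype ι]

theorem solidSimplex_eq_empty {r : ℝ} (hr : r < 0) : solidSimplex ι r = ∅ :=
  Set.eq_empty_of_forall_notMem fun _ hx ↦
    (hr.trans_le (Finset.sum_nonneg fun i _ ↦ hx.1 i)).not_ge hx.2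

theorem convexHull_insert_zero_range_single [DecidableEq ι] :
    convexHull ℝ (insert 0 (Set.range fun i : ι ↦ (Pi.single i 1 : ι → ℝ))) =
      solidSimplex ι 1 := by
  refine (convexHull_min ?_ ?_).antisymm ?_
  · rintro x (rfl | ⟨k, rfl⟩)
    · simp [solidSimplex]
    · exact ⟨(Pi.single_nonneg.2 zero_le_one : (0 : ι → ℝ) ≤ Pi.single k 1), by simp⟩
  · rintro x ⟨hx0, hx1⟩ y ⟨hy0, hy1⟩ s t hs ht hst
    refine ⟨fun i ↦ add_nonneg (mul_nonneg hs (hx0 i)) (mul_nonneg ht (hy0 i)), ?_⟩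
    calc ∑ i, (s • x + t • y) i = s * ∑ i, x i + t * ∑ i, y i := by
          simp [Finset.sum_add_distrib, Finset.mul_sum]
      _ ≤ s * 1 + t * 1 := by gcongr
      _ = 1 := by linarith
  · rintro x ⟨hx0, hx1⟩
    let weight : Option ι → ℝ := fun o ↦ o.elim (1 - ∑ i, x i) x
    let vertex : Option ι → ι → ℝ := fun o ↦ o.elim 0 (Pi.single · 1)
    have hx : x = ∑ o, weight o • vertex o := by
      simp only [Fintype.sum_option, weight, vertex, Option.elim, smul_zero, zero_add]
      exact pi_eq_sum_univ' x
    rw [hx]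
    refine (convex_convexHull ℝ _).sum_mem ?_ (by simp [Fintype.sum_option, weight]) ?_
    · rintro (_ | i) -
      exacts [sub_nonneg.2 hx1, hx0 i]
    · rintro (_ | i) - <;> exact subset_convexHull ℝ _ (by simp [vertex])

theorem volume_solidSimplex_fin_succ (n : ℕ) (r : ℝ) :
    volume (solidSimplex (Fin (n + 1)) r) =
      ∫⁻ t in Set.Icc 0 r, volume (solidSimplex (Fin n) (r - t)) := by
  let T : Set (ℝ × (Fin n → ℝ)) := {p | 0 ≤ p.1 ∧ (∀ i, 0 ≤ p.2 i) ∧ p.1 + ∑ i, p.2 i ≤ r}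
  have hT : MeasurableSet T := by
    refine IsClosed.measurableSet ?_
    simp only [T, Set.ofPred_and, Set.ofPred_forall]
    exact (isClosed_le (by fun_prop) (by fun_prop)).inter
      ((isClosed_iInter fun i ↦ isClosed_le (by fun_prop) (by fun_prop)).inter
        (isClosed_le (by fun_prop) (by fun_prop)))
  have hpre : solidSimplex (Fin (n + 1)) r =
      MeasurableEquiv.piFinSuccAbove (fun _ ↦ ℝ) 0 ⁻¹' T := by
    ext x
    simp [T, solidSimplex, Fin.forall_fin_succ, Fin.sum_univ_succ, MeasurableEquiv.piFinSuccAbove,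
      Fin.tail, and_assoc]
  have hslice (t : ℝ) : volume (Prod.mk t ⁻¹' T) =
      (Set.Icc 0 r).indicator (fun t ↦ volume (solidSimplex (Fin n) (r - t))) t := by
    have hmem : Prod.mk t ⁻¹' T = {x | 0 ≤ t ∧ x ∈ solidSimplex (Fin n) (r - t)} := by
      ext x
      simp [T, solidSimplex, le_sub_iff_add_le']
    by_cases ht0 : 0 ≤ t
    · by_cases htr : t ≤ r
      · simp [hmem, ht0, htr]
      · simp [hmem, htr, solidSimplex_eq_empty (sub_neg.2 (not_le.1 htr))]
    · simp [hmem, ht0]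
  rw [hpre, (volume_preserving_piFinSuccAbove (fun _ ↦ ℝ) 0).measure_preimage
    hT.nullMeasurableSet, Measure.volume_eq_prod, Measure.prod_apply hT]
  simp_rw [hslice]
  exact lintegral_indicator measurableSet_Icc _

theorem lintegral_sub_pow_div_factorial (n : ℕ) {r : ℝ} (hr : 0 ≤ r) :
    ∫⁻ t in Set.Icc 0 r, ENNReal.ofReal ((r - t) ^ n / n.factorial) =
      ENNReal.ofReal (r ^ (n + 1) / (n + 1).factorial) := by
  rw [← ofReal_integral_eq_lintegral_ofReal]
  · rw [integral_Icc_eq_integral_Ioc, ← intervalIntegral.integral_of_le hr,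
      intervalIntegral.integral_comp_sub_left (fun t ↦ t ^ n / (n.factorial : ℝ)) r,
      intervalIntegral.integral_div, integral_pow, Nat.factorial_succ]
    push_cast
    field_simp
    simp
  · exact ContinuousOn.integrableOn_Icc (by fun_prop)
  · filter_upwards [ae_restrict_mem measurableSet_Icc] with t ht
    exact div_nonneg (pow_nonneg (sub_nonneg.2 ht.2) n) (Nat.cast_nonneg _)

theorem volume_solidSimplex_fin (n : ℕ) {r : ℝ} (hr : 0 ≤ r) :
    volume (solidSimplex (Fin n) r) = ENNReal.ofReal (r ^ n / n.factorial) := by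
  induction n generalizing r with
  | zero =>
    have huniv : solidSimplex (Fin 0) r = Set.univ := by
      ext x
      simp [solidSimplex, hr]
    simp [huniv, volume_pi]
  | succ n ih =>
    rw [volume_solidSimplex_fin_succ, ← lintegral_sub_pow_div_factorial n hr]
    exact setLIntegral_congr_fun measurableSet_Icc fun t ht ↦ ih (sub_nonneg.2 ht.2)

theorem volume_solidSimplex {r : ℝ} (hr : 0 ≤ r) :
    volume (solidSimplex ι r) =
      ENNReal.ofReal (r ^ Fintype.card ι / (Fintype.card ι).factorial) := by
  let e := Fintype.equivFin ι
  have hpre : solidSimplex ι r =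
      MeasurableEquiv.piCongrLeft (fun _ ↦ ℝ) e ⁻¹' solidSimplex (Fin (Fintype.card ι)) r := by
    ext x
    have hx (i : ι) : MeasurableEquiv.piCongrLeft (fun _ ↦ ℝ) e x (e i) = x i :=
      MeasurableEquiv.piCongrLeft_apply_apply ..
    simp [solidSimplex, ← e.forall_congr_right, ← e.sum_comp, hx]
  rw [hpre, (volume_measurePreserving_piCongrLeft (fun _ ↦ ℝ) e).measure_preimage_equiv,
    volume_solidSimplex_fin _ hr]

/-- The Newton polytope of `1 + ∑ k, a k * z ^ (α k)` for the exponent vectors `α k = L k`. -/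
def newtonPolytope {ι κ : Type*} (L : Matrix κ ι ℤ) : Set (ι → ℝ) :=
  convexHull ℝ (insert 0 (Set.range fun k j ↦ (L k j : ℝ)))

theorem newtonPolytope_eq_image_solidSimplex {ι κ : Type*} [Fintype κ] (L : Matrix κ ι ℤ) :
    newtonPolytope L =
      (L.map fun m ↦ (m : ℝ)).transpose.mulVecLin '' solidSimplex κ 1 := by
  classical
  rw [newtonPolytope, ← convexHull_insert_zero_range_single, LinearMap.image_convexHull,
    Set.image_insert_eq, map_zero, ← Set.range_comp]
  congr! 3 with k
  ext j
  simp

theorem factorial_mul_volume_newtonPolytope [DecidableEq ι] (L : Matrix ι ι ℤ) :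
    ((Fintype.card ι).factorial : ℝ≥0∞) * volume (newtonPolytope L) = L.det.natAbs := by
  have hdet : LinearMap.det (L.map fun m ↦ (m : ℝ)).transpose.mulVecLin = (L.det : ℝ) := by
    rw [← Matrix.toLin'_apply', LinearMap.det_toLin', Matrix.det_transpose, Int.cast_det]
  have hfact : ((Fintype.card ι).factorial : ℝ≥0∞) *
      ENNReal.ofReal (1 ^ Fintype.card ι / (Fintype.card ι).factorial) = 1 := by
    rw [← ENNReal.ofReal_natCast, ← ENNReal.ofReal_mul (by positivity), one_pow,
      mul_one_div_cancel (by positivity), ENNReal.ofReal_one]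
  rw [newtonPolytope_eq_image_solidSimplex, Measure.addHaar_image_linearMap, hdet,
    volume_solidSimplex zero_le_one, mul_left_comm, hfact, mul_one, ← Int.cast_abs,
    Int.abs_eq_natAbs, Int.cast_natCast, ENNReal.ofReal_natCast]

end SolidSimplex

section HyperplaneCoamoeba

open Filter Set Topology
open scoped Real

variable {ι : Type*}

/-- The vectors in `2πℤ^ι` as an additive map, so that `x + periodVector ι m` runs over the lifts
to `ℝ^ι` of the point of the torus below `x`. -/
noncomputable def periodVector (ι : Type*) : (ι → ℤ) →+ (ι → ℝ) where
  toFun m k := 2 * π * m k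
  map_zero' := by ext; simp
  map_add' m m' := by ext; simp [mul_add]

@[simp]
theorem periodVector_apply (m : ι → ℤ) (k : ι) : periodVector ι m k = 2 * π * m k := rfl

theorem exists_sub_periodVector_mem_Ioc (y : ι → ℝ) :
    ∃ m, ∀ k, (y - periodVector ι m) k ∈ Ioc (-π) π := by
  refine ⟨fun k ↦ toIocDiv Real.two_pi_pos (-π) (y k), fun k ↦ ?_⟩
  have hmem := sub_toIocDiv_zsmul_mem_Ioc Real.two_pi_pos (-π) (y k)
  have hright : -π + 2 * π = π := by ring
  rw [zsmul_eq_mul, hright] at hmem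
  convert hmem using 1
  simp [mul_comm]

theorem exp_periodVector_mul_I (y : ι → ℝ) (m : ι → ℤ) (k : ι) :
    exp ((y + periodVector ι m) k * I) = exp (y k * I) := by
  rw [exp_eq_exp_iff_exists_int]
  exact ⟨m k, by simp; ring⟩

/-- The vectors of angles for which the unit vectors in these directions lie, together with `1`, in
a common open half-plane of `ℂ`; `φ` is the direction of the inner normal. -/
def halfPlaneCell (ι : Type*) : Set (ι → ℝ) :=
  {y | ∃ φ : ℝ, |φ| < π / 2 ∧ ∀ k, |y k - φ| < π / 2}

theorem zero_mem_halfPlaneCell : (0 : ι → ℝ) ∈ halfPlaneCell ι :=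
  ⟨0, by simp [Real.pi_pos], by simp [Real.pi_pos]⟩

theorem isOpen_halfPlaneCell [Finite ι] : IsOpen (halfPlaneCell ι) := by
  simp only [halfPlaneCell, ofPred_exists, ofPred_and, ofPred_forall]
  exact isOpen_iUnion fun φ ↦ isOpen_const.inter
    (isOpen_iInter_of_finite fun k ↦ isOpen_lt (by fun_prop) continuous_const)

theorem convex_halfPlaneCell : Convex ℝ (halfPlaneCell ι) := by
  rintro y ⟨φ, hφ, hy⟩ z ⟨ψ, hψ, hz⟩ s t hs ht hst
  have hball {u v : ℝ} (hu : |u| < π / 2) (hv : |v| < π / 2) : |s * u + t * v| < π / 2 := by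
    simp only [← mem_ball_zero_iff, ← Real.norm_eq_abs] at hu hv ⊢
    exact convex_ball (0 : ℝ) (π / 2) hu hv hs ht hst
  refine ⟨s * φ + t * ψ, hball hφ hψ, fun k ↦ ?_⟩
  convert hball (hy k) (hz k) using 2
  simp only [Pi.add_apply, Pi.smul_apply, smul_eq_mul]
  ring

theorem abs_lt_pi_of_mem_halfPlaneCell {y : ι → ℝ} (hy : y ∈ halfPlaneCell ι) (k : ι) :
    |y k| < π := by
  obtain ⟨φ, hφ, hy⟩ := hy
  linarith [abs_sub_abs_le_abs_sub (y k) φ, hy k]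

theorem eq_of_sub_periodVector_mem_halfPlaneCell {y : ι → ℝ} {m m' : ι → ℤ}
    (hm : y - periodVector ι m ∈ halfPlaneCell ι)
    (hm' : y - periodVector ι m' ∈ halfPlaneCell ι) : m = m' := by
  ext k
  have h := abs_lt.1 (abs_lt_pi_of_mem_halfPlaneCell hm k)
  have h' := abs_lt.1 (abs_lt_pi_of_mem_halfPlaneCell hm' k)
  simp only [Pi.sub_apply, periodVector_apply] at h h'
  have hlt : |2 * π * ((m k - m' k : ℤ) : ℝ)| < 2 * π * 1 := by
    push_cast
    rw [abs_lt]
    constructor <;> linarith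
  rw [abs_mul, abs_of_pos Real.two_pi_pos, mul_lt_mul_iff_right₀ Real.two_pi_pos] at hlt
  exact sub_eq_zero.1 (Int.abs_lt_one_iff.1 (mod_cast hlt))

theorem exists_forall_abs_sub_lt {κ : Type*} [Finite κ] [Nonempty κ] {s : κ → ℝ} {d : ℝ}
    (hs : ∀ i j, s i - s j < d) : ∃ c, ∀ i, |s i - c| < d / 2 := by
  obtain ⟨M, hM⟩ := Finite.exists_max s
  obtain ⟨m, hm⟩ := Finite.exists_min s
  refine ⟨(s M + s m) / 2, fun i ↦ abs_lt.2 ⟨?_, ?_⟩⟩ <;> linarith [hM i, hm i, hs M m]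

theorem mem_halfPlaneCell_of_sub_lt_pi [Finite ι] {y : ι → ℝ} (hy : ∀ k, |y k| < π)
    (hsub : ∀ j k, y j - y k < π) : y ∈ halfPlaneCell ι := by
  let s : Option ι → ℝ := fun o ↦ o.elim 0 y
  have hs : ∀ i j, s i - s j < π := by
    rintro (_ | i) (_ | j)
    · simp [s, Real.pi_pos]
    · simpa [s] using neg_lt.1 (abs_lt.1 (hy j)).1
    · simpa [s] using (abs_lt.1 (hy i)).2
    · exact hsub i j
  obtain ⟨φ, hφ⟩ := exists_forall_abs_sub_lt hs
  exact ⟨φ, by simpa [s] using hφ none, fun k ↦ hφ (some k)⟩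

variable [Fintype ι]

/-- The lifted coamoeba of the hyperplane `1 + ∑ k, w k = 0`, with each `w k` in polar form. -/
def hyperplaneLiftedCoamoeba (ι : Type*) [Fintype ι] : Set (ι → ℝ) :=
  {y | ∃ t : ι → ℝ, (∀ k, 0 < t k) ∧ 1 + ∑ k, (t k : ℂ) * exp (y k * I) = 0}

theorem mem_hyperplaneLiftedCoamoeba_of_pos_relation {y : ι → ℝ} {t₀ : ℝ} {t : ι → ℝ}
    (ht₀ : 0 < t₀) (ht : ∀ k, 0 < t k) (h : t₀ + ∑ k, (t k : ℂ) * exp (y k * I) = 0) :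
    y ∈ hyperplaneLiftedCoamoeba ι := by
  refine ⟨fun k ↦ t k / t₀, fun k ↦ div_pos (ht k) ht₀, ?_⟩
  have ht₀' : (t₀ : ℂ) ≠ 0 := mod_cast ht₀.ne'
  simp only [ofReal_div, div_mul_eq_mul_div]
  rw [← Finset.sum_div, ← div_self ht₀', ← add_div, h, zero_div]

theorem add_periodVector_mem_hyperplaneLiftedCoamoeba_iff (y : ι → ℝ) (m : ι → ℤ) :
    y + periodVector ι m ∈ hyperplaneLiftedCoamoeba ι ↔ y ∈ hyperplaneLiftedCoamoeba ι := by
  simp only [hyperplaneLiftedCoamoeba, mem_ofPred_eq, exp_periodVector_mul_I]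

theorem add_periodVector_mem_closure_hyperplaneLiftedCoamoeba_iff (y : ι → ℝ) (m : ι → ℤ) :
    y + periodVector ι m ∈ closure (hyperplaneLiftedCoamoeba ι) ↔
      y ∈ closure (hyperplaneLiftedCoamoeba ι) := by
  have hpre : Homeomorph.addRight (periodVector ι m) ⁻¹' hyperplaneLiftedCoamoeba ι =
      hyperplaneLiftedCoamoeba ι :=
    ext fun y ↦ add_periodVector_mem_hyperplaneLiftedCoamoeba_iff y m
  conv_rhs => rw [← hpre, ← Homeomorph.preimage_closure]
  rfl

/-- Rotating by `-φ` gives every term of `1 + ∑ k, t k * exp (y k * I)` a positive real part. -/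
theorem disjoint_halfPlaneCell_hyperplaneLiftedCoamoeba :
    Disjoint (halfPlaneCell ι) (hyperplaneLiftedCoamoeba ι) := by
  rw [Set.disjoint_left]
  rintro y ⟨φ, hφ, hy⟩ ⟨t, ht, hsum⟩
  have hcos {u : ℝ} (hu : |u| < π / 2) : 0 < Real.cos u :=
    Real.cos_pos_of_mem_Ioo (abs_lt.1 hu)
  have hrot : exp (-φ * I) * (1 + ∑ k, (t k : ℂ) * exp (y k * I)) =
      exp ((-φ : ℝ) * I) + ∑ k, (t k : ℂ) * exp ((y k - φ : ℝ) * I) := by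
    rw [mul_add, mul_one, Finset.mul_sum, ofReal_neg]
    congr! 2 with k
    rw [mul_left_comm, ← exp_add]
    congr 2
    push_cast
    ring
  have hre : Real.cos (-φ) + ∑ k, t k * Real.cos (y k - φ) = 0 := by
    simpa only [hsum, mul_zero, zero_re, add_re, re_sum, re_ofReal_mul, exp_ofReal_mul_I_re] using
      (congrArg re hrot).symm
  have hpos : 0 < Real.cos (-φ) := hcos (by rwa [abs_neg])
  exact (add_pos_of_pos_of_nonneg hpos
    (Finset.sum_nonneg fun k _ ↦ (mul_pos (ht k) (hcos (hy k))).le)).ne' hre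

theorem update_add_arg_mem_hyperplaneLiftedCoamoeba [DecidableEq ι] {y : ι → ℝ} {t₀ : ℝ}
    {t : ι → ℝ} {p : ι} {w : ℂ} (ht₀ : 0 < t₀) (ht : ∀ k ≠ p, 0 < t k) (hw : w ≠ 0)
    (h : t₀ + (w * exp (y p * I) + ∑ k ∈ Finset.univ.erase p, (t k : ℂ) * exp (y k * I)) = 0) :
    Function.update y p (y p + w.arg) ∈ hyperplaneLiftedCoamoeba ι := by
  refine mem_hyperplaneLiftedCoamoeba_of_pos_relation (t := Function.update t p ‖w‖) ht₀
    (fun k ↦ ?_) ?_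
  · rcases eq_or_ne k p with rfl | hk
    · simpa using hw
    · simpa [hk] using ht k hk
  · rw [← h, ← Finset.add_sum_erase _ _ (Finset.mem_univ p)]
    congr 2
    · conv_rhs => rw [← norm_mul_exp_arg_mul_I w]
      simp only [Function.update_self, ofReal_add, add_mul, exp_add]
      ring
    · refine Finset.sum_congr rfl fun k hk ↦ ?_
      simp only [Function.update_of_ne (Finset.ne_of_mem_erase hk)]

/-- A nonnegative relation is the limit of positive ones: raise all coefficients except the `p`-th
by `δ`, and let the `p`-th term absorb the error, which turns it by an angle tending to `0`. -/
theorem mem_closure_of_nonneg_relation {y : ι → ℝ} {c₀ : ℝ} {c : ι → ℝ} {p : ι}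
    (hc₀ : 0 ≤ c₀) (hc : 0 ≤ c) (hp : 0 < c p)
    (h : c₀ + ∑ k, (c k : ℂ) * exp (y k * I) = 0) :
    y ∈ closure (hyperplaneLiftedCoamoeba ι) := by
  classical
  let v : ℂ := 1 + ∑ k ∈ Finset.univ.erase p, exp (y k * I)
  let w : ℝ → ℂ := fun δ ↦ c p - δ * v * exp (-(y p * I))
  have hw : ContinuousAt w 0 := Continuous.continuousAt (by fun_prop)
  have hw₀ : w 0 = c p := by simp [w]
  have harg : Tendsto (fun δ ↦ (w δ).arg) (𝓝 0) (𝓝 0) := by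
    have hslit : w 0 ∈ slitPlane := by simpa [hw₀] using hp
    simpa [Function.comp_def, hw₀, arg_ofReal_of_nonneg hp.le] using
      ((continuousAt_arg hslit).comp hw).tendsto
  have hlim : Tendsto (fun δ ↦ Function.update y p (y p + (w δ).arg)) (𝓝[>] 0) (𝓝 y) := by
    have := (tendsto_const_nhds (x := y)).update p (harg.const_add (y p))
    rw [add_zero, Function.update_eq_self] at this
    exact this.mono_left nhdsWithin_le_nhds
  have hne : ∀ᶠ δ in 𝓝[>] 0, w δ ≠ 0 :=
    (hw.eventually_ne (by simpa [hw₀] using hp.ne')).filter_mono nhdsWithin_le_nhds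
  refine mem_closure_of_tendsto hlim ?_
  filter_upwards [hne, self_mem_nhdsWithin] with δ hδ hδ₀
  refine update_add_arg_mem_hyperplaneLiftedCoamoeba (t := fun k ↦ c k + δ)
    (add_pos_of_nonneg_of_pos hc₀ hδ₀) (fun k _ ↦ add_pos_of_nonneg_of_pos (hc k) hδ₀) hδ ?_
  rw [← Finset.add_sum_erase _ _ (Finset.mem_univ p)] at h
  have hcancel : exp (-(y p * I)) * exp (y p * I) = 1 := by simp [← exp_add]
  simp only [ofReal_add, add_mul, Finset.sum_add_distrib, ← Finset.mul_sum, w]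
  linear_combination h - δ * v * hcancel

theorem mem_closure_of_eq_pi {y : ι → ℝ} {k : ι} (hk : y k = π) :
    y ∈ closure (hyperplaneLiftedCoamoeba ι) := by
  classical
  refine mem_closure_of_nonneg_relation (c₀ := 1) (c := Pi.single k 1) (p := k) zero_le_one
    (Pi.single_nonneg.2 zero_le_one) (by simp) ?_
  simp [Pi.single_apply, hk, apply_ite ofReal]

theorem neg_sin_sub_add_relation (α β : ℝ) :
    ((-Real.sin (α - β) : ℝ) : ℂ) + ((-Real.sin β : ℝ) * exp (α * I) + Real.sin α * exp (β * I)) =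
      0 := by
  apply Complex.ext
  · simp only [add_re, ofReal_re, re_ofReal_mul, exp_ofReal_mul_I_re, zero_re, Real.sin_sub]
    ring
  · simp only [add_im, ofReal_im, im_ofReal_mul, exp_ofReal_mul_I_im, zero_im]
    ring

theorem mem_closure_of_pi_le_sub {y : ι → ℝ} {j k : ι} (hj : y j < π) (hk : -π < y k)
    (hjk : π ≤ y j - y k) : y ∈ closure (hyperplaneLiftedCoamoeba ι) := by
  classical
  have hne : j ≠ k := by
    rintro rfl
    linarith [Real.pi_pos]
  have hsinj : 0 < Real.sin (y j) := Real.sin_pos_of_pos_of_lt_pi (by linarith) hj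
  have hsink : Real.sin (y k) < 0 := Real.sin_neg_of_neg_of_neg_pi_lt (by linarith) hk
  have hsub : Real.sin (y j - y k) ≤ 0 := by
    rw [← neg_nonneg, ← Real.sin_sub_pi]
    exact Real.sin_nonneg_of_nonneg_of_le_pi (by linarith) (by linarith)
  refine mem_closure_of_nonneg_relation (c₀ := -Real.sin (y j - y k)) (p := k)
    (c := Pi.single j (-Real.sin (y k)) + Pi.single k (Real.sin (y j)))
    (neg_nonneg.2 hsub)
    (add_nonneg (Pi.single_nonneg.2 (neg_pos.2 hsink).le) (Pi.single_nonneg.2 hsinj.le))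
    (by simpa [hne.symm] using hsinj) ?_
  rw [← neg_sin_sub_add_relation (y j) (y k)]
  simp [Pi.single_apply, add_mul, Finset.sum_add_distrib, apply_ite ofReal, ite_mul]

theorem mem_closure_of_notMem_halfPlaneCell {y : ι → ℝ} (hy : ∀ k, y k ∈ Ioc (-π) π)
    (hcell : y ∉ halfPlaneCell ι) : y ∈ closure (hyperplaneLiftedCoamoeba ι) := by
  by_cases hpi : ∃ k, y k = π
  · exact mem_closure_of_eq_pi hpi.choose_spec
  push Not at hpi
  have hlt (k : ι) : y k < π := (hy k).2.lt_of_ne (hpi k)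
  obtain ⟨j, k, hjk⟩ : ∃ j k, π ≤ y j - y k := by
    contrapose! hcell
    exact mem_halfPlaneCell_of_sub_lt_pi (fun k ↦ abs_lt.2 ⟨(hy k).1, hlt k⟩) hcell
  exact mem_closure_of_pi_le_sub (hlt j) (hy k).1 hjk

theorem notMem_closure_hyperplaneLiftedCoamoeba_iff {y : ι → ℝ} :
    y ∉ closure (hyperplaneLiftedCoamoeba ι) ↔
      ∃ m, y - periodVector ι m ∈ halfPlaneCell ι := by
  have hshift (m : ι → ℤ) : y ∈ closure (hyperplaneLiftedCoamoeba ι) ↔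
      y - periodVector ι m ∈ closure (hyperplaneLiftedCoamoeba ι) := by
    rw [← add_periodVector_mem_closure_hyperplaneLiftedCoamoeba_iff (y - _) m, sub_add_cancel]
  constructor
  · intro hy
    obtain ⟨m, hm⟩ := exists_sub_periodVector_mem_Ioc y
    refine ⟨m, ?_⟩
    contrapose! hy
    exact (hshift m).2 (mem_closure_of_notMem_halfPlaneCell hm hy)
  · rintro ⟨m, hm⟩ hy
    exact (disjoint_halfPlaneCell_hyperplaneLiftedCoamoeba.closure_right
      isOpen_halfPlaneCell).notMem_of_mem_left hm ((hshift m).1 hy)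

end HyperplaneCoamoeba

theorem setOf_connectedComponentIn_sUnion {X : Type*} [TopologicalSpace X] {𝒞 : Set (Set X)}
    (hopen : ∀ C ∈ 𝒞, IsOpen C) (hconn : ∀ C ∈ 𝒞, IsConnected C)
    (hdisj : 𝒞.PairwiseDisjoint id) :
    {D | ∃ x ∈ ⋃₀ 𝒞, D = connectedComponentIn (⋃₀ 𝒞) x} = 𝒞 := by
  have hcomponent {C : Set X} (hC : C ∈ 𝒞) {x : X} (hx : x ∈ C) :
      connectedComponentIn (⋃₀ 𝒞) x = C := by
    have hcover : connectedComponentIn (⋃₀ 𝒞) x ⊆ C ∪ ⋃₀ (𝒞 \ {C}) := by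
      rw [← Set.sUnion_insert, Set.insert_sdiff_self_of_mem hC]
      exact connectedComponentIn_subset _ _
    have hrest : Disjoint C (⋃₀ (𝒞 \ {C})) :=
      Set.disjoint_sUnion_right.2 fun D hD ↦ hdisj hC hD.1 (Ne.symm hD.2)
    refine Set.Subset.antisymm ?_
      ((hconn C hC).isPreconnected.subset_connectedComponentIn hx (Set.subset_sUnion_of_mem hC))
    exact isPreconnected_connectedComponentIn.subset_left_of_subset_union (hopen C hC)
      (isOpen_sUnion fun D hD ↦ hopen D hD.1) hrest hcover
      ⟨x, mem_connectedComponentIn ⟨C, hC, hx⟩, hx⟩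
  ext D
  constructor
  · rintro ⟨x, ⟨C, hC, hx⟩, rfl⟩
    rwa [hcomponent hC hx]
  · intro hD
    obtain ⟨x, hx⟩ := (hconn D hD).nonempty
    exact ⟨x, ⟨D, hD, hx⟩, (hcomponent hD hx).symm⟩

theorem ncard_range_eq_card {α β γ : Type*} {f : α → β} {g : α → γ}
    (hg : Function.Surjective g) (h : ∀ a b, f a = f b ↔ g a = g b) :
    (Set.range f).ncard = Nat.card γ := by
  obtain ⟨s, hs⟩ := hg.hasRightInverse
  have hinj : Function.Injective (f ∘ s) := fun c d hcd ↦ by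
    simpa only [hs c, hs d] using (h _ _).1 hcd
  have hrange : Set.range f = Set.range (f ∘ s) := by
    refine Set.Subset.antisymm ?_ (Set.range_comp_subset_range s f)
    rintro _ ⟨a, rfl⟩
    exact ⟨g a, (h _ _).2 (hs (g a))⟩
  rw [hrange, ← Nat.card_coe_set_eq, Nat.card_range_of_injective hinj]

theorem card_quotient_range_mulVecLin {ι : Type*} [Fintype ι] [DecidableEq ι]
    {L : Matrix ι ι ℤ} (hL : L.det ≠ 0) :
    Nat.card ((ι → ℤ) ⧸ LinearMap.range L.mulVecLin) = L.det.natAbs := by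
  rw [← Submodule.natAbs_det_equiv _
    (LinearEquiv.ofInjective L.mulVecLin (Matrix.mulVec_injective_of_det_ne_zero hL)),
    ← LinearMap.det_toLin' L]
  rfl

section SimplexCoamoeba

open Set
open scoped Real

variable {ι κ : Type*}

/-- The universal covering of the torus `(ℝ/2πℤ)^ι`. -/
noncomputable def torusProj (x : ι → ℝ) (j : ι) : AddCircle (2 * π) := x j

theorem isOpenQuotientMap_torusProj : IsOpenQuotientMap (torusProj (ι := ι)) :=
  .piMap fun _ ↦ QuotientAddGroup.isOpenQuotientMap_mk

theorem torusProj_eq_iff {x x' : ι → ℝ} :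
    torusProj x = torusProj x' ↔ ∃ l, x = x' + periodVector ι l := by
  have hcoord (j : ι) : torusProj x j = torusProj x' j ↔ ∃ m : ℤ, x j - x' j = 2 * π * m :=
    Real.Angle.angle_eq_iff_two_pi_dvd_sub
  simp only [funext_iff, hcoord, Classical.skolem, sub_eq_iff_eq_add', Pi.add_apply,
    periodVector_apply]

theorem coe_eq_coe_arg_iff {z : ℂ} (hz : z ≠ 0) (x : ℝ) :
    (x : AddCircle (2 * π)) = z.arg ↔ ∃ r : ℝ, z = exp (r + x * I) := by
  constructor
  · intro hx
    obtain ⟨m, hm⟩ := Real.Angle.angle_eq_iff_two_pi_dvd_sub.1 hx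
    have harg : exp (x * I) = exp (z.arg * I) := by
      rw [exp_eq_exp_iff_exists_int]
      refine ⟨m, ?_⟩
      rw [sub_eq_iff_eq_add'.1 hm]
      push_cast
      ring
    refine ⟨Real.log ‖z‖, ?_⟩
    rw [exp_add, harg, ← ofReal_exp, Real.exp_log (norm_pos_iff.2 hz), norm_mul_exp_arg_mul_I]
  · rintro ⟨r, rfl⟩
    rw [exp_add, ← ofReal_exp, exp_mul_I, ← ofReal_cos, ← ofReal_sin]
    exact (arg_mul_cos_add_sin_mul_I_coe_angle (Real.exp_pos r) x).symm

variable [Fintype ι]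

/-- The arguments of the monomials `a k * ∏ j, z j ^ L k j` when `x` is the vector of arguments of
`z`. -/
noncomputable def monomialArg (L : Matrix κ ι ℤ) (a : κ → ℂ) (x : ι → ℝ) : κ → ℝ :=
  (fun k ↦ (a k).arg) + (L.map fun m ↦ (m : ℝ)).mulVec x

theorem continuous_monomialArg (L : Matrix κ ι ℤ) (a : κ → ℂ) :
    Continuous (monomialArg L a) :=
  continuous_const.add (Continuous.matrix_mulVec continuous_const continuous_id)

theorem monomialArg_add_periodVector (L : Matrix κ ι ℤ) (a : κ → ℂ) (x : ι → ℝ) (l : ι → ℤ) :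
    monomialArg L a (x + periodVector ι l) =
      monomialArg L a x + periodVector κ (L.mulVec l) := by
  rw [monomialArg, monomialArg, Matrix.mulVec_add, add_assoc]
  congr 2
  ext k
  simp [Matrix.mulVec, dotProduct, Finset.mul_sum, mul_left_comm]

theorem monomial_exp_eq (L : Matrix κ ι ℤ) (a : κ → ℂ) (r x : ι → ℝ) (k : κ) :
    a k * ∏ j, exp (r j + x j * I) ^ L k j =
      ((‖a k‖ * Real.exp ((L.map fun m ↦ (m : ℝ)).mulVec r k) : ℝ) : ℂ) *
        exp (monomialArg L a x k * I) := by
  have hprod : ∏ j, exp (r j + x j * I) ^ L k j =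
      exp ((L.map fun m ↦ (m : ℝ)).mulVec r k + (L.map fun m ↦ (m : ℝ)).mulVec x k * I) := by
    simp only [← exp_int_mul, ← exp_sum, Matrix.mulVec, dotProduct, Matrix.map_apply]
    push_cast
    rw [Finset.sum_mul, ← Finset.sum_add_distrib]
    congr! 2 with j
    ring
  conv_lhs => rw [hprod, ← norm_mul_exp_arg_mul_I (a k)]
  simp only [monomialArg, Pi.add_apply, ofReal_mul, ofReal_add, ofReal_exp, add_mul, exp_add]
  ring

theorem exists_norm_mul_exp_mulVec_eq {M : Matrix κ ι ℝ} (hM : Function.Surjective M.mulVec)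
    {a : κ → ℂ} (ha : ∀ k, a k ≠ 0) {t : κ → ℝ} (ht : ∀ k, 0 < t k) :
    ∃ r, ∀ k, ‖a k‖ * Real.exp (M.mulVec r k) = t k := by
  obtain ⟨r, hr⟩ := hM fun k ↦ Real.log (t k / ‖a k‖)
  refine ⟨r, fun k ↦ ?_⟩
  have hak : 0 < ‖a k‖ := norm_pos_iff.2 (ha k)
  rw [hr, Real.exp_log (div_pos (ht k) hak), mul_div_cancel₀ _ hak.ne']

/-- The open set of lifted arguments `x` whose monomial arguments lie in the translate of
`halfPlaneCell κ` by `periodVector κ m`. -/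
def chamber (L : Matrix κ ι ℤ) (a : κ → ℂ) (m : κ → ℤ) : Set (ι → ℝ) :=
  {x | monomialArg L a x - periodVector κ m ∈ halfPlaneCell κ}

theorem isOpen_chamber [Finite κ] (L : Matrix κ ι ℤ) (a : κ → ℂ) (m : κ → ℤ) :
    IsOpen (chamber L a m) :=
  isOpen_halfPlaneCell.preimage ((continuous_monomialArg L a).sub continuous_const)

theorem convex_chamber (L : Matrix κ ι ℤ) (a : κ → ℂ) (m : κ → ℤ) :
    Convex ℝ (chamber L a m) := by
  intro x hx y hy s t hs ht hst
  rw [chamber, mem_ofPred_eq]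
  convert convex_halfPlaneCell hx hy hs ht hst using 1
  simp only [monomialArg, Matrix.mulVec_add, Matrix.mulVec_smul]
  obtain rfl := eq_sub_of_add_eq hst
  module

theorem add_periodVector_mem_chamber_iff {L : Matrix κ ι ℤ} {a : κ → ℂ} {m : κ → ℤ}
    {x : ι → ℝ} {l : ι → ℤ} :
    x + periodVector ι l ∈ chamber L a (m + L.mulVec l) ↔ x ∈ chamber L a m := by
  rw [chamber, mem_ofPred_eq, monomialArg_add_periodVector, map_add, add_sub_add_right_eq_sub]
  rfl

theorem eq_of_mem_chamber {L : Matrix κ ι ℤ} {a : κ → ℂ} {m m' : κ → ℤ} {x : ι → ℝ}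
    (hm : x ∈ chamber L a m) (hm' : x ∈ chamber L a m') : m = m' :=
  eq_of_sub_periodVector_mem_halfPlaneCell hm hm'

/-- The image of `chamber L a m` in the torus. -/
def torusChamber (L : Matrix κ ι ℤ) (a : κ → ℂ) (m : κ → ℤ) : Set (ι → AddCircle (2 * π)) :=
  torusProj '' chamber L a m

theorem torusChamber_add_mulVec_subset (L : Matrix κ ι ℤ) (a : κ → ℂ) (m : κ → ℤ) (l : ι → ℤ) :
    torusChamber L a m ⊆ torusChamber L a (m + L.mulVec l) := by
  rintro _ ⟨x, hx, rfl⟩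
  exact ⟨x + periodVector ι l, add_periodVector_mem_chamber_iff.2 hx,
    torusProj_eq_iff.2 ⟨l, rfl⟩⟩

theorem torusChamber_add_mulVec (L : Matrix κ ι ℤ) (a : κ → ℂ) (m : κ → ℤ) (l : ι → ℤ) :
    torusChamber L a (m + L.mulVec l) = torusChamber L a m := by
  refine Subset.antisymm ?_ (torusChamber_add_mulVec_subset L a m l)
  simpa [Matrix.mulVec_neg] using torusChamber_add_mulVec_subset L a (m + L.mulVec l) (-l)

theorem exists_eq_add_mulVec_of_mem_torusChamber {L : Matrix κ ι ℤ} {a : κ → ℂ} {m m' : κ → ℤ}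
    {θ : ι → AddCircle (2 * π)} (hm : θ ∈ torusChamber L a m) (hm' : θ ∈ torusChamber L a m') :
    ∃ l, m = m' + L.mulVec l := by
  obtain ⟨x, hx, rfl⟩ := hm
  obtain ⟨x', hx', hxx'⟩ := hm'
  obtain ⟨l, rfl⟩ := torusProj_eq_iff.1 hxx'.symm
  exact ⟨l, eq_of_mem_chamber hx (add_periodVector_mem_chamber_iff.2 hx')⟩

theorem pairwiseDisjoint_range_torusChamber (L : Matrix κ ι ℤ) (a : κ → ℂ) :
    (range (torusChamber L a)).PairwiseDisjoint id := by
  rintro _ ⟨m, rfl⟩ _ ⟨m', rfl⟩ hne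
  refine Set.disjoint_left.2 fun θ hm hm' ↦ hne ?_
  obtain ⟨l, rfl⟩ := exists_eq_add_mulVec_of_mem_torusChamber hm hm'
  exact torusChamber_add_mulVec L a m' l

section MulVecSurjective

variable {L : Matrix κ ι ℤ} (hL : Function.Surjective (L.map fun m ↦ (m : ℝ)).mulVec)
include hL

theorem surjective_monomialArg (a : κ → ℂ) : Function.Surjective (monomialArg L a) := by
  intro y
  obtain ⟨x, hx⟩ := hL (y - fun k ↦ (a k).arg)
  exact ⟨x, by rw [monomialArg, hx, add_sub_cancel]⟩

theorem isOpenMap_monomialArg [Finite κ] (a : κ → ℂ) : IsOpenMap (monomialArg L a) :=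
  (isOpenMap_add_left _).comp
    ((L.map fun m ↦ (m : ℝ)).mulVecLin.isOpenMap_of_finiteDimensional hL)

theorem isConnected_chamber (a : κ → ℂ) (m : κ → ℤ) : IsConnected (chamber L a m) := by
  obtain ⟨x, hx⟩ := surjective_monomialArg hL a (periodVector κ m)
  refine ⟨⟨x, ?_⟩, (convex_chamber L a m).isPreconnected⟩
  rw [chamber, mem_ofPred_eq, hx, sub_self]
  exact zero_mem_halfPlaneCell

theorem isConnected_torusChamber (a : κ → ℂ) (m : κ → ℤ) : IsConnected (torusChamber L a m) :=
  (isConnected_chamber hL a m).image _ isOpenQuotientMap_torusProj.continuous.continuousOn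

theorem torusChamber_eq_iff (a : κ → ℂ) (m m' : κ → ℤ) :
    torusChamber L a m = torusChamber L a m' ↔
      (LinearMap.range L.mulVecLin).mkQ m = (LinearMap.range L.mulVecLin).mkQ m' := by
  rw [Submodule.mkQ_apply, Submodule.mkQ_apply, Submodule.Quotient.eq]
  constructor
  · intro h
    obtain ⟨θ, hθ⟩ := (isConnected_torusChamber hL a m).nonempty
    obtain ⟨l, rfl⟩ := exists_eq_add_mulVec_of_mem_torusChamber hθ (h ▸ hθ)
    exact ⟨l, by simp⟩
  · rintro ⟨l, hl⟩
    rw [← sub_add_cancel m m', ← hl, add_comm]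
    exact torusChamber_add_mulVec L a m' l

end MulVecSurjective

variable [Fintype κ]

/-- The coamoeba of the hypersurface `1 + ∑ k, a k * ∏ j, z j ^ L k j = 0` in `(ℂˣ)^ι`; when the
rows of `L` are linearly independent, its Newton polytope is a simplex. -/
def coamoeba (L : Matrix κ ι ℤ) (a : κ → ℂ) : Set (ι → AddCircle (2 * π)) :=
  {θ | ∃ z : ι → ℂ, (∀ j, z j ≠ 0) ∧ 1 + ∑ k, a k * ∏ j, z j ^ L k j = 0 ∧
    ∀ j, θ j = ((z j).arg : AddCircle (2 * π))}

theorem torusProj_mem_coamoeba_iff (L : Matrix κ ι ℤ) (a : κ → ℂ) (x : ι → ℝ) :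
    torusProj x ∈ coamoeba L a ↔
      ∃ r : ι → ℝ, 1 + ∑ k, a k * ∏ j, exp (r j + x j * I) ^ L k j = 0 := by
  constructor
  · rintro ⟨z, hz, hzero, harg⟩
    choose r hr using fun j ↦ (coe_eq_coe_arg_iff (hz j) (x j)).1 (harg j)
    exact ⟨r, by simpa only [hr] using hzero⟩
  · rintro ⟨r, hr⟩
    exact ⟨fun j ↦ exp (r j + x j * I), fun j ↦ exp_ne_zero _, hr,
      fun j ↦ (coe_eq_coe_arg_iff (exp_ne_zero _) (x j)).2 ⟨r j, rfl⟩⟩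

section MulVecSurjective

variable {L : Matrix κ ι ℤ} {a : κ → ℂ}
  (hL : Function.Surjective (L.map fun m ↦ (m : ℝ)).mulVec) (ha : ∀ k, a k ≠ 0)
include hL ha

theorem preimage_torusProj_coamoeba :
    torusProj ⁻¹' coamoeba L a = monomialArg L a ⁻¹' hyperplaneLiftedCoamoeba κ := by
  ext x
  rw [mem_preimage, torusProj_mem_coamoeba_iff]
  simp only [monomial_exp_eq]
  constructor
  · rintro ⟨r, hr⟩
    exact ⟨_, fun k ↦ mul_pos (norm_pos_iff.2 (ha k)) (Real.exp_pos _), hr⟩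
  · rintro ⟨t, ht, hsum⟩
    obtain ⟨r, hr⟩ := exists_norm_mul_exp_mulVec_eq hL ha ht
    exact ⟨r, by simpa only [hr] using hsum⟩

theorem preimage_torusProj_closure_coamoeba :
    torusProj ⁻¹' closure (coamoeba L a) =
      monomialArg L a ⁻¹' closure (hyperplaneLiftedCoamoeba κ) := by
  rw [isOpenQuotientMap_torusProj.isOpenMap.preimage_closure_eq_closure_preimage
    isOpenQuotientMap_torusProj.continuous, preimage_torusProj_coamoeba hL ha,
    (isOpenMap_monomialArg hL a).preimage_closure_eq_closure_preimage
      (continuous_monomialArg L a)]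

theorem compl_closure_coamoeba : (closure (coamoeba L a))ᶜ = ⋃₀ range (torusChamber L a) := by
  have hlift : torusProj ⁻¹' (closure (coamoeba L a))ᶜ = ⋃ m, chamber L a m := by
    ext x
    rw [preimage_compl, preimage_torusProj_closure_coamoeba hL ha, mem_compl_iff, mem_preimage,
      notMem_closure_hyperplaneLiftedCoamoeba_iff, mem_iUnion]
    rfl
  rw [sUnion_range, ← isOpenQuotientMap_torusProj.surjective.image_preimage
    (closure (coamoeba L a))ᶜ, hlift, image_iUnion]
  rfl

theorem components_compl_closure_coamoeba :
    {C | ∃ θ ∈ (closure (coamoeba L a))ᶜ, C = connectedComponentIn (closure (coamoeba L a))ᶜ θ} =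
      range (torusChamber L a) := by
  rw [compl_closure_coamoeba hL ha]
  refine setOf_connectedComponentIn_sUnion ?_ ?_ (pairwiseDisjoint_range_torusChamber L a)
  · rintro _ ⟨m, rfl⟩
    exact isOpenQuotientMap_torusProj.isOpenMap _ (isOpen_chamber L a m)
  · rintro _ ⟨m, rfl⟩
    exact isConnected_torusChamber hL a m

theorem ncard_components_compl_closure_coamoeba :
    {C | ∃ θ ∈ (closure (coamoeba L a))ᶜ,
      C = connectedComponentIn (closure (coamoeba L a))ᶜ θ}.ncard =
      Nat.card ((κ → ℤ) ⧸ LinearMap.range L.mulVecLin) := by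
  rw [components_compl_closure_coamoeba hL ha]
  exact ncard_range_eq_card (Submodule.mkQ_surjective _) (torusChamber_eq_iff hL a)

end MulVecSurjective

end SimplexCoamoeba

theorem surjective_mulVec_map_intCast {ι : Type*} [Fintype ι] [DecidableEq ι]
    {L : Matrix ι ι ℤ} (hL : L.det ≠ 0) :
    Function.Surjective (L.map fun m ↦ (m : ℝ)).mulVec := by
  rw [Matrix.mulVec_surjective_iff_isUnit, Matrix.isUnit_iff_isUnit_det, ← Int.cast_det,
    isUnit_iff_ne_zero]
  exact mod_cast hL

/-- **Lemma 3.3(ii)** (second part). For `f(z) = 1 + Σ_k a_k z^{α_k}` with invertible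
integer exponent matrix `L`, whose Newton polytope `Δ_f` is the simplex with vertices
`0, α₁, …, α_n` (the rows of `L`), the number of connected components of the
complement in the torus `Tⁿ = (ℝ/2πℤ)ⁿ` of the closure of the coamoeba of `V_f`
equals `|det L| = n! · Vol(Δ_f)`. -/
theorem coamoeba_simplex_complement_components_card
    (n : ℕ) (L : Matrix (Fin n) (Fin n) ℤ) (hL : L.det ≠ 0)
    (a : Fin n → ℂ) (ha : ∀ k, a k ≠ 0)
    (Δ : Set (Fin n → ℝ))
    (hΔ : Δ = convexHull ℝ (insert 0 (Set.range fun (k : Fin n) (j : Fin n) => (L k j : ℝ))))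
    (coAmoeba : Set (Fin n → AddCircle (2 * Real.pi)))
    (hcoAmoeba : coAmoeba = {θ : Fin n → AddCircle (2 * Real.pi) | ∃ z : Fin n → ℂ,
      (∀ j, z j ≠ 0) ∧ 1 + ∑ k, a k * ∏ j, z j ^ (L k j) = 0 ∧
      ∀ j, θ j = ((z j).arg : AddCircle (2 * Real.pi))}) :
    {C | ∃ θ ∈ (closure coAmoeba)ᶜ,
        C = connectedComponentIn (closure coAmoeba)ᶜ θ}.ncard = L.det.natAbs ∧
      (L.det.natAbs : ℝ≥0∞) = (n.factorial : ℝ≥0∞) * MeasureTheory.volume Δ := by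
  subst hΔ hcoAmoeba
  constructor
  · rw [← card_quotient_range_mulVecLin hL]
    exact ncard_components_compl_closure_coamoeba (surjective_mulVec_map_intCast hL) ha
  · rw [← factorial_mul_volume_newtonPolytope L, Fintype.card_fin]
    rfl
end

section
/- Let f(z,w) = Σ_{(α,β)∈A} a_{(α,β)} z^α w^β be a Laurent polynomial in two variables with finite nonempty support A ⊆ ℤ² and nonzero complex coefficients, and let Δ_f ⊆ ℝ² be its Newton polygon. Then the Lebesgue (Haar) measure of the coamoeba of V_f in the torus T² = (ℝ/2πℤ)² (of total mass 4π²) is at most 2π² · Area(Δ_f), where Area denotes 2-dimensional Lebesgue measure. (Remark 5.17(2); the paper proves the stronger bound for area counted with multiplicity.) -/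
open Complex
open scoped ENNReal

instance : Fact (0 < 2 * Real.pi) := ⟨by positivity⟩

/-!
Translating `θ` by the half-period with signs `s ∈ {±1}²` turns membership in the coamoeba into the
condition that the open quadrant `s` contains a zero of `x ↦ f(x e^{iθ})`, `x ∈ (ℝ*)²`. Averaging
over the four half-periods, if for almost every `θ` at most `K` quadrants contain a zero, then the
coamoeba has measure at most `K π²`. It remains to find such a `K` with `K ≤ 2 Area(Δ)`.

If `2 Area(Δ) ≥ 4`, take `K = 4`. Otherwise, up to a unimodular change of variables, there are two
cases. If the support lies on two consecutive lattice lines, `f` is a monomial times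
`p(z) + w q(z)`, and the real zeros are counted by the real roots of `Im (p * conj q)`, whose degree
is the sum of the lengths of the two parallel edges, that is, `2 Area(Δ)`. If the support consists
of the vertices of a triangle with `2 Area(Δ) = 3`, and possibly of its only interior lattice point,
then eliminating one vertex places the real zeros on a line, which misses one of the four quadrants,
and `K = 3` will do.
-/

namespace Coamoeba

open MeasureTheory
open scoped ComplexConjugate

/-- The torus `(ℝ/2πℤ)^ι` in which coamoebas live. -/
abbrev Torus (ι : Type*) := ι → AddCircle (2 * Real.pi)

section Monomials

variable {ι : Type*} [Fintype ι] {G H : Type*} [CommGroup G] [CommGroup H]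

/-- The Laurent monomial `x^n = ∏ x_j^{n_j}`. Taking `x` in a group rather than in a field makes
the laws of exponents unconditional; `G` will be `ℂˣ`, `ℝˣ`, `ℤˣ` or `Circle`. -/
def laurentMonomial (x : ι → G) (n : ι → ℤ) : G := ∏ j, x j ^ n j

lemma laurentMonomial_add (x : ι → G) (m n : ι → ℤ) :
    laurentMonomial x (m + n) = laurentMonomial x m * laurentMonomial x n := by
  simp [laurentMonomial, zpow_add, Finset.prod_mul_distrib]

lemma laurentMonomial_sub (x : ι → G) (m n : ι → ℤ) :
    laurentMonomial x (m - n) = laurentMonomial x m * (laurentMonomial x n)⁻¹ := by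
  simp [laurentMonomial, zpow_sub, Finset.prod_mul_distrib]

lemma laurentMonomial_zsmul (x : ι → G) (k : ℤ) (n : ι → ℤ) :
    laurentMonomial x (k • n) = laurentMonomial x n ^ k := by
  simp [laurentMonomial, mul_comm k, zpow_mul, Finset.prod_zpow]

lemma mul_laurentMonomial (x y : ι → G) (n : ι → ℤ) :
    laurentMonomial (x * y) n = laurentMonomial x n * laurentMonomial y n := by
  simp [laurentMonomial, mul_zpow, Finset.prod_mul_distrib]

lemma map_laurentMonomial (φ : G →* H) (x : ι → G) (n : ι → ℤ) :
    φ (laurentMonomial x n) = laurentMonomial (φ ∘ x) n := by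
  simp [laurentMonomial]

/-- The value at `z ∈ (ℂ*)^ι` of the Laurent polynomial `∑_{α ∈ A} a_α z^α`. -/
def laurentEval (A : Finset (ι → ℤ)) (a : (ι → ℤ) → ℂ) (z : ι → ℂˣ) : ℂ :=
  ∑ α ∈ A, a α * (laurentMonomial z α : ℂˣ)

end Monomials

section Polar

variable {ι : Type*}

/-- The tuple of unit complex numbers `e^{iθ_j}`. -/
noncomputable def expTorus (θ : Torus ι) : ι → Circle := fun j => (θ j).toCircle

/-- The point `(x_j e^{iθ_j})_j`. The radii `x_j` may be negative, so that `polar · θ` parametrizes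
the real torus `(ℝ*)^ι` rotated by `θ`. -/
noncomputable def polar (x : ι → ℝˣ) (θ : Torus ι) : ι → ℂˣ :=
  Units.map (ofRealHom : ℝ →* ℂ) ∘ x * Circle.toUnits ∘ expTorus θ

lemma coe_polar (x : ι → ℝˣ) (θ : Torus ι) (j : ι) :
    (polar x θ j : ℂ) = (x j : ℝ) * (θ j).toCircle := rfl

lemma coe_laurentMonomial_polar [Fintype ι] (x : ι → ℝˣ) (θ : Torus ι) (n : ι → ℤ) :
    ((laurentMonomial (polar x θ) n : ℂˣ) : ℂ) =
      ((laurentMonomial x n : ℝˣ) : ℝ) * (laurentMonomial (expTorus θ) n : Circle) := by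
  rw [polar, mul_laurentMonomial, ← map_laurentMonomial, ← map_laurentMonomial]
  rfl

lemma coe_arg_eq_iff {z : ℂ} (hz : z ≠ 0) (θ : AddCircle (2 * Real.pi)) :
    θ = (z.arg : AddCircle (2 * Real.pi)) ↔ z = ‖z‖ * θ.toCircle := by
  have hcircle : (AddCircle.toCircle (z.arg : AddCircle (2 * Real.pi)) : ℂ) = exp (z.arg * I) := by
    rw [AddCircle.toCircle_apply_mk, div_self (by positivity), one_mul, Circle.coe_exp]
  constructor
  · rintro rfl
    rw [hcircle, norm_mul_exp_arg_mul_I]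
  · intro h
    apply AddCircle.injective_toCircle (T := 2 * Real.pi) (by positivity)
    apply Circle.ext
    rw [hcircle]
    apply mul_left_cancel₀ (ofReal_ne_zero.2 (norm_ne_zero_iff.2 hz))
    rw [← h, norm_mul_exp_arg_mul_I]

end Polar

section Definition

variable {ι : Type*} [Fintype ι] (A : Finset (ι → ℤ)) (a : (ι → ℤ) → ℂ)

/-- The coamoeba of the hypersurface `∑_{α ∈ A} a_α z^α = 0` in `(ℂ*)^ι`. -/
def coamoeba : Set (Torus ι) :=
  {θ | ∃ z : ι → ℂˣ, laurentEval A a z = 0 ∧ ∀ j, θ j = (arg (z j) : AddCircle (2 * Real.pi))}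

/-- The zeros of the Laurent polynomial on the real torus rotated by `θ`. -/
def realZeros (θ : Torus ι) : Set (ι → ℝˣ) :=
  {x | laurentEval A a (polar x θ) = 0}

lemma coamoeba_eq_setOf_ne_zero :
    coamoeba A a = {θ | ∃ z : ι → ℂ, (∀ j, z j ≠ 0) ∧ (∑ α ∈ A, a α * ∏ j, z j ^ (α j)) = 0 ∧
      ∀ j, θ j = ((z j).arg : AddCircle (2 * Real.pi))} := by
  ext θ
  constructor
  · rintro ⟨z, hz, hθ⟩
    exact ⟨fun j => z j, fun j => (z j).ne_zero,
      by simpa [laurentEval, laurentMonomial] using hz, hθ⟩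
  · rintro ⟨z, hz, hzero, hθ⟩
    lift z to ι → ℂˣ using fun j => (hz j).isUnit
    exact ⟨z, by simpa [laurentEval, laurentMonomial] using hzero, hθ⟩

lemma mem_coamoeba_iff_exists_realZeros {θ : Torus ι} :
    θ ∈ coamoeba A a ↔ ∃ x ∈ realZeros A a θ, ∀ j, 0 < (x j : ℝ) := by
  constructor
  · rintro ⟨z, hz, hθ⟩
    have hnorm : ∀ j, ‖(z j : ℂ)‖ ≠ 0 := fun j => norm_ne_zero_iff.2 (z j).ne_zero
    refine ⟨fun j => Units.mk0 _ (hnorm j), ?_, fun j => norm_pos_iff.2 (z j).ne_zero⟩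
    have hpolar : polar (fun j => Units.mk0 _ (hnorm j)) θ = z := by
      funext j
      exact Units.ext ((coe_arg_eq_iff (z j).ne_zero (θ j)).1 (hθ j)).symm
    rwa [realZeros, Set.mem_ofPred_eq, hpolar]
  · rintro ⟨x, hx, hpos⟩
    refine ⟨polar x θ, hx, fun j => (coe_arg_eq_iff (Units.ne_zero _) (θ j)).2 ?_⟩
    rw [coe_polar, norm_mul, norm_real, Real.norm_of_nonneg (hpos j).le, Circle.norm_coe,
      mul_one]

lemma measurableSet_coamoeba : MeasurableSet (coamoeba A a) := by
  let radii (t : ι → ℝ) : ι → ℝˣ := fun j => Units.mk0 (Real.exp (t j)) (Real.exp_ne_zero _)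
  let Z : Set ((ι → ℝ) × Torus ι) := {p | laurentEval A a (polar (radii p.1) p.2) = 0}
  have hcont : Continuous fun p : (ι → ℝ) × Torus ι => laurentEval A a (polar (radii p.1) p.2) := by
    simp only [laurentEval, laurentMonomial, Units.coe_prod, Units.val_zpow_eq_zpow_val]
    refine continuous_finsetSum _ fun α _ => continuous_const.mul ?_
    refine continuous_finsetProd _ fun j _ => Continuous.zpow₀ ?_ _ fun p => .inl (Units.ne_zero _)
    have := AddCircle.continuous_toCircle (T := 2 * Real.pi)
    simp only [coe_polar, radii, Units.val_mk0]
    fun_prop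
  have himage : coamoeba A a = Prod.snd '' Z := by
    ext θ
    rw [mem_coamoeba_iff_exists_realZeros]
    constructor
    · rintro ⟨x, hx, hpos⟩
      have hexp : radii (fun j => Real.log (x j)) = x :=
        funext fun j => Units.ext (Real.exp_log (hpos j))
      exact ⟨(fun j => Real.log (x j), θ), by rwa [← hexp] at hx, rfl⟩
    · rintro ⟨⟨t, θ⟩, hZ, rfl⟩
      exact ⟨radii t, hZ, fun j => Real.exp_pos (t j)⟩
  have hsigma : IsSigmaCompact Z :=
    isSigmaCompact_univ.of_isClosed_subset (isClosed_singleton.preimage hcont) (Set.subset_univ _)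
  obtain ⟨S, hS, hSZ⟩ := hsigma.image continuous_snd
  rw [himage, ← hSZ]
  exact .iUnion fun n => (hS n).measurableSet

end Definition

section Orthants

/-- The signs of the open orthants of `(ℝ*)^ι` that meet `Z`. -/
def orthants {ι : Type*} (Z : Set (ι → ℝˣ)) : Set (ι → ℤˣ) :=
  {s | ∃ x ∈ Z, ∀ j, 0 < ((s j : ℤ) : ℝ) * (x j : ℝ)}

/-- The point of order two of the torus with `e^{iθ_j} = s_j`. -/
noncomputable def halfPeriod {ι : Type*} (s : ι → ℤˣ) : Torus ι :=
  fun j => ((if s j = 1 then 0 else Real.pi : ℝ) : AddCircle (2 * Real.pi))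

lemma toCircle_halfPeriod {ι : Type*} (s : ι → ℤˣ) (j : ι) :
    ((halfPeriod s j).toCircle : ℂ) = (s j : ℤ) := by
  rw [halfPeriod, AddCircle.toCircle_apply_mk, div_self (by positivity), one_mul, Circle.coe_exp]
  rcases Int.units_eq_one_or (s j) with h | h <;> simp [h]

lemma encard_orthants_le {ι : Type*} (Z : Set (ι → ℝˣ)) : (orthants Z).encard ≤ Z.encard := by
  choose! x hxZ hpos using fun (s : ι → ℤˣ) (hs : s ∈ orthants Z) => hs
  refine Set.encard_le_encard_of_injOn (f := x) hxZ fun s hs t ht hst => ?_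
  funext j
  have hsj := hpos s hs j
  have htj := hpos t ht j
  rw [← hst] at htj
  rcases Int.units_eq_one_or (s j) with h | h <;> rcases Int.units_eq_one_or (t j) with h' | h' <;>
    simp [h, h'] at hsj htj ⊢ <;> linarith

variable {ι : Type*} [Fintype ι] (A : Finset (ι → ℤ)) (a : (ι → ℤ) → ℂ)

lemma add_halfPeriod_mem_coamoeba_iff {θ : Torus ι} {s : ι → ℤˣ} :
    θ + halfPeriod s ∈ coamoeba A a ↔ s ∈ orthants (realZeros A a θ) := by
  let flip (x : ι → ℝˣ) : ι → ℝˣ := fun j => Units.map (Int.castRingHom ℝ : ℤ →* ℝ) (s j) * x j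
  have hflip : ∀ x, polar (flip x) (θ + halfPeriod s) = polar x θ := by
    intro x
    funext j
    apply Units.ext
    have hsq : ((s j : ℤ) : ℂ) * (s j : ℤ) = 1 := by exact_mod_cast Int.units_coe_mul_self (s j)
    simp only [coe_polar, flip, Pi.add_apply, AddCircle.toCircle_add, Circle.coe_mul,
      toCircle_halfPeriod, Units.val_mul, Units.coe_map, MonoidHom.coe_coe, eq_intCast, ofReal_mul,
      ofReal_intCast]
    linear_combination (x j : ℝ) * ((θ j).toCircle : ℂ) * hsq
  have hinvol : Function.Involutive flip := by
    intro x
    funext j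
    simp only [flip, ← mul_assoc, ← map_mul, Int.units_mul_self, map_one, one_mul]
  rw [mem_coamoeba_iff_exists_realZeros]
  constructor
  · rintro ⟨x, hx, hpos⟩
    refine ⟨flip x, ?_, fun j => ?_⟩
    · rwa [realZeros, Set.mem_ofPred_eq, ← hflip, hinvol]
    · have := hpos j
      rw [← hinvol x] at this
      exact this
  · rintro ⟨x, hx, hpos⟩
    exact ⟨flip x, by rwa [realZeros, Set.mem_ofPred_eq, hflip], hpos⟩

end Orthants

section Averaging

lemma card_mul_measure_le {G ι : Type*} [AddGroup G] [MeasurableSpace G] [MeasurableAdd G]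
    (μ : Measure G) [μ.IsAddRightInvariant] [Fintype ι] (t : ι → G) {C : Set G}
    (hC : MeasurableSet C) {K : ℕ} (hK : ∀ᵐ x ∂μ, {i | x + t i ∈ C}.encard ≤ K) :
    Fintype.card ι * μ C ≤ K * μ Set.univ := by
  classical
  have hmeas : ∀ i, MeasurableSet {x | x + t i ∈ C} := fun i => measurable_add_const (t i) hC
  calc Fintype.card ι * μ C
      = ∑ i, ∫⁻ x, Set.indicator {x | x + t i ∈ C} 1 x ∂μ := by
        simp_rw [lintegral_indicator_one (hmeas _)]
        simp [← Set.preimage_ofPred_eq, measure_preimage_add_right]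
    _ = ∫⁻ x, ∑ i, Set.indicator {x | x + t i ∈ C} 1 x ∂μ :=
        (lintegral_finsetSum _ fun i _ => measurable_one.indicator (hmeas i)).symm
    _ ≤ ∫⁻ _, K ∂μ := by
        apply lintegral_mono_ae
        filter_upwards [hK] with x hx
        rw [Set.encard_eq_coe_toFinset_card] at hx
        simp only [Set.indicator_apply, Set.mem_ofPred_eq, Pi.one_apply, Finset.sum_boole]
        rw [← Set.toFinset_ofPred]
        exact_mod_cast hx
    _ = K * μ Set.univ := lintegral_const _

variable {ι : Type*} [Fintype ι]

lemma volume_univ_torus :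
    volume (Set.univ : Set (Torus ι)) = ENNReal.ofReal (2 * Real.pi) ^ Fintype.card ι := by
  simp [volume_pi, Measure.pi_univ, AddCircle.measure_univ]

/-- Among the `2^|ι|` translates of `θ` by half-periods, as many lie in the coamoeba as there are
orthants containing real zeros; averaging over `θ` gives the bound. -/
lemma volume_coamoeba_le_of_encard_orthants_le {A : Finset (ι → ℤ)} {a : (ι → ℤ) → ℂ} {K : ℕ}
    (hK : ∀ᵐ θ : Torus ι, (orthants (realZeros A a θ)).encard ≤ K) :
    volume (coamoeba A a) ≤ K * ENNReal.ofReal Real.pi ^ Fintype.card ι := by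
  classical
  have hle := card_mul_measure_le volume halfPeriod (measurableSet_coamoeba A a)
    (by simpa only [add_halfPeriod_mem_coamoeba_iff, Set.ofPred_mem_eq] using hK)
  rw [volume_univ_torus, ENNReal.ofReal_mul zero_le_two, mul_pow, mul_left_comm] at hle
  rw [← ENNReal.mul_le_mul_iff_right (a := 2 ^ Fintype.card ι) (by simp) (by simp)]
  simpa using hle

end Averaging

section Genericity

variable {ι : Type*} [Fintype ι]

/-- The character `θ ↦ ⟨n, θ⟩` of the torus. -/
noncomputable def torusCharacter (n : ι → ℤ) : Torus ι →+ AddCircle (2 * Real.pi) :=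
  ∑ j, n j • Pi.evalAddMonoidHom _ j

lemma torusCharacter_apply (n : ι → ℤ) (θ : Torus ι) : torusCharacter n θ = ∑ j, n j • θ j := by
  simp [torusCharacter]

lemma toCircle_torusCharacter (n : ι → ℤ) (θ : Torus ι) :
    (torusCharacter n θ).toCircle = laurentMonomial (expTorus θ) n := by
  rw [torusCharacter_apply, laurentMonomial]
  induction (Finset.univ : Finset ι) using Finset.cons_induction with
  | empty => simp
  | cons j s hj ih =>
    rw [Finset.sum_cons, Finset.prod_cons, AddCircle.toCircle_add, ih, AddCircle.toCircle_zsmul,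
      expTorus]

lemma torusCharacter_surjective {n : ι → ℤ} (hn : n ≠ 0) :
    Function.Surjective (torusCharacter n) := by
  classical
  obtain ⟨j, hj⟩ := Function.ne_iff.1 hn
  intro t
  refine ⟨Pi.single j (DivisibleBy.div t (n j)), ?_⟩
  rw [torusCharacter_apply, Finset.sum_eq_single_of_mem j (Finset.mem_univ j)
    fun i _ hi => by rw [Pi.single_eq_of_ne hi, smul_zero], Pi.single_eq_same]
  exact DivisibleBy.div_cancel t hj

lemma nontrivial_addCircle {p : ℝ} [hp : Fact (0 < p)] : Nontrivial (AddCircle p) :=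
  have : Nontrivial (Set.Ico 0 (0 + p)) :=
    (Set.Ico_infinite (by simpa using hp.out)).nontrivial.coe_sort
  (AddCircle.equivIco p 0).nontrivial

/-- The character `torusCharacter n` pushes Haar measure to a Haar measure on the circle, which has
no atoms because the circle is not discrete. -/
lemma ae_laurentMonomial_ne {n : ι → ℤ} (hn : n ≠ 0) (w : Circle) :
    ∀ᵐ θ : Torus ι, laurentMonomial (expTorus θ) n ≠ w := by
  have hcont : Continuous (torusCharacter n) := by
    simp only [funext (torusCharacter_apply n)]
    fun_prop
  have := Measure.isAddHaarMeasure_map_of_isFiniteMeasure volume (torusCharacter n) hcont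
    (torusCharacter_surjective hn)
  have := nontrivial_addCircle (p := 2 * Real.pi)
  have hperiod : 2 * Real.pi ≠ 0 := by positivity
  obtain ⟨t, rfl⟩ := (AddCircle.homeomorphCircle hperiod).surjective w
  filter_upwards [ae_of_ae_map hcont.aemeasurable (Measure.ae_ne _ t)] with θ hθ
  rw [← toCircle_torusCharacter, AddCircle.homeomorphCircle_apply]
  exact (AddCircle.injective_toCircle hperiod).ne hθ

lemma ae_im_mul_laurentMonomial_ne_zero {n : ι → ℤ} (hn : n ≠ 0) {c : ℂ} (hc : c ≠ 0) :
    ∀ᵐ θ : Torus ι, (c * (laurentMonomial (expTorus θ) n : Circle)).im ≠ 0 := by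
  filter_upwards [ae_laurentMonomial_ne (smul_ne_zero (two_ne_zero (α := ℤ)) hn)
    (Circle.ofConjDivSelf c hc)] with θ hθ him
  apply hθ
  rw [laurentMonomial_zsmul, zpow_ofNat]
  set u := laurentMonomial (expTorus θ) n
  have hreal : conj c * conj (u : ℂ) = c * u := by rw [← map_mul, conj_eq_iff_im.2 him]
  have hunit : (u : ℂ) * conj (u : ℂ) = 1 := by
    rw [← Circle.coe_inv_eq_conj, ← Circle.coe_mul, mul_inv_cancel, Circle.coe_one]
  apply Circle.ext
  change (u : ℂ) ^ 2 = conj c / c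
  rw [eq_div_iff hc]
  linear_combination conj c * hunit - (u : ℂ) * hreal

lemma ae_im_conj_mul_ne_zero {m n : ι → ℤ} (hmn : m ≠ n) {b c : ℂ} (hb : b ≠ 0) (hc : c ≠ 0) :
    ∀ᵐ θ : Torus ι, (conj (b * ((laurentMonomial (expTorus θ) m : Circle) : ℂ)) *
      (c * ((laurentMonomial (expTorus θ) n : Circle) : ℂ))).im ≠ 0 := by
  filter_upwards [ae_im_mul_laurentMonomial_ne_zero (sub_ne_zero.2 hmn.symm)
    (mul_ne_zero ((map_ne_zero conj).2 hb) hc)] with θ hθ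
  rw [laurentMonomial_sub, Circle.coe_mul, Circle.coe_inv_eq_conj] at hθ
  rw [map_mul]
  convert hθ using 2
  ring

open Polynomial in
/-- Only finitely many directions in the complex plane contain a nonzero root of `q`. -/
lemma ae_eval_mul_laurentMonomial_ne_zero {e : ι → ℤ} (he : e ≠ 0) {q : ℂ[X]} (hq : q ≠ 0) :
    ∀ᵐ θ : Torus ι, ∀ s : ℝ, s ≠ 0 →
      q.eval (s * ((laurentMonomial (expTorus θ) e : Circle) : ℂ)) ≠ 0 := by
  have hroot : ∀ z ∈ q.rootSet ℂ, z ≠ 0 →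
      ∀ᵐ θ : Torus ι, (conj z * (laurentMonomial (expTorus θ) e : Circle)).im ≠ 0 :=
    fun z _ hz => ae_im_mul_laurentMonomial_ne_zero he (by simpa using hz)
  have hall : ∀ᵐ θ : Torus ι, ∀ z ∈ q.rootSet ℂ, z ≠ 0 →
      (conj z * (laurentMonomial (expTorus θ) e : Circle)).im ≠ 0 := by
    refine (ae_ball_iff (q.rootSet_finite ℂ).countable).2 fun z hz => ?_
    exact Filter.eventually_imp_distrib_left.2 (hroot z hz)
  filter_upwards [hall] with θ hθ s hs hzero
  set u := laurentMonomial (expTorus θ) e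
  have hunit : conj (u : ℂ) * u = 1 := by
    rw [← Circle.coe_inv_eq_conj, ← Circle.coe_mul, inv_mul_cancel, Circle.coe_one]
  apply hθ (s * u) (mem_rootSet.2 ⟨hq, hzero⟩)
    (mul_ne_zero (ofReal_ne_zero.2 hs) (Circle.coe_ne_zero u))
  rw [map_mul, mul_assoc, hunit, conj_ofReal, mul_one, ofReal_im]

end Genericity

section PlaneGeometry

section Wedge

variable {R : Type*} [CommRing R]

/-- The determinant of two plane vectors. -/
def wedge (u v : Fin 2 → R) : R := u 0 * v 1 - u 1 * v 0

/-- Twice the signed area of the triangle `xyz`. -/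
def doubleArea (x y z : Fin 2 → R) : R := wedge (y - x) (z - x)

lemma wedge_intCast (u v : Fin 2 → ℤ) :
    wedge (fun j => (u j : R)) (fun j => (v j : R)) = (wedge u v : ℤ) := by
  simp [wedge]

lemma doubleArea_intCast (x y z : Fin 2 → ℤ) :
    doubleArea (fun j => (x j : R)) (fun j => (y j : R)) (fun j => (z j : R)) =
      (doubleArea x y z : ℤ) := by
  simp [doubleArea, wedge]

lemma doubleArea_rotate (x y z : Fin 2 → R) : doubleArea y z x = doubleArea x y z := by
  simp only [doubleArea, wedge, Pi.sub_apply]; ring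

lemma doubleArea_swap (x y z : Fin 2 → R) : doubleArea y x z = -doubleArea x y z := by
  simp only [doubleArea, wedge, Pi.sub_apply]; ring

lemma doubleArea_add_add (x y z w : Fin 2 → R) :
    doubleArea y z w + doubleArea z x w + doubleArea x y w = doubleArea x y z := by
  simp only [doubleArea, wedge, Pi.sub_apply]; ring

lemma doubleArea_smul (x y z w : Fin 2 → R) :
    doubleArea x y z • w =
      doubleArea y z w • x + doubleArea z x w • y + doubleArea x y w • z := by
  funext j
  fin_cases j <;> simp [doubleArea, wedge] <;> ring

end Wedge

/-- `A` lies on two consecutive lattice lines parallel to a primitive vector `e`, or on one: its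
lattice width is at most one. -/
def IsThin (A : Finset (Fin 2 → ℤ)) : Prop :=
  ∃ e : Fin 2 → ℤ, IsCoprime (e 0) (e 1) ∧ ∀ X ∈ A, ∀ Y ∈ A, wedge e (Y - X) ≤ 1

/-- Up to unimodular equivalence, `A` consists of the vertices of the triangle with vertices
`(1, 0)`, `(0, 1)`, `(-1, -1)` and possibly of its interior lattice point. -/
def IsExceptionalTriangle (A : Finset (Fin 2 → ℤ)) : Prop :=
  ∃ P Q R C : Fin 2 → ℤ, (P ∈ A ∧ Q ∈ A ∧ R ∈ A) ∧ P + Q + R = (3 : ℤ) • C ∧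
    wedge (P - C) (Q - C) = 1 ∧ ∀ X ∈ A, X = P ∨ X = Q ∨ X = R ∨ X = C

/-- `A` contains the vertices of a quadrilateral with diagonal `XY` and area at least `K / 2`; it
may be degenerate, so that a triangle counts as well. -/
def HasQuadrilateral (A : Finset (Fin 2 → ℤ)) (K : ℤ) : Prop :=
  ∃ X ∈ A, ∃ Y ∈ A, ∃ Z ∈ A, ∃ W ∈ A, K ≤ doubleArea X Y Z - doubleArea X Y W

lemma HasQuadrilateral.mono {A : Finset (Fin 2 → ℤ)} {K L : ℤ} (h : HasQuadrilateral A L)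
    (hKL : K ≤ L) : HasQuadrilateral A K := by
  obtain ⟨X, hX, Y, hY, Z, hZ, W, hW, hL⟩ := h
  exact ⟨X, hX, Y, hY, Z, hZ, W, hW, hKL.trans hL⟩

section Area

/-- The half-open standard triangle; without its bottom edge, its images under affine maps can lie
in an open half-plane bounded by that edge. -/
def standardTriangle : Set (Fin 2 → ℝ) := {p | 0 ≤ p 0 ∧ 0 < p 1 ∧ p 0 + p 1 ≤ 1}

/-- The open unit square is covered by the triangle and its reflection in the centre. -/
lemma half_le_volume_standardTriangle : ENNReal.ofReal (1 / 2) ≤ volume standardTriangle := by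
  let square : Set (Fin 2 → ℝ) := Set.univ.pi fun _ => Set.Ioo 0 1
  have hcover : square ⊆ standardTriangle ∪ (fun p => 1 - p) ⁻¹' standardTriangle := by
    intro p hp
    have h0 := hp 0 (Set.mem_univ _)
    have h1 := hp 1 (Set.mem_univ _)
    rcases le_total (p 0 + p 1) 1 with h | h
    · exact .inl ⟨h0.1.le, h1.1, h⟩
    · exact .inr ⟨sub_nonneg.2 h0.2.le, sub_pos.2 h1.2, by
        simp only [Pi.sub_apply, Pi.one_apply]
        linarith⟩
  have hmeas : MeasurableSet standardTriangle := by
    unfold standardTriangle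
    measurability
  have hreflect := (Measure.measurePreserving_sub_left volume
    (1 : Fin 2 → ℝ)).measure_preimage hmeas.nullMeasurableSet
  have hle : volume square ≤ 2 * volume standardTriangle := by
    rw [two_mul]
    exact (measure_mono hcover).trans ((measure_union_le _ _).trans (by rw [hreflect]))
  have hsquare : volume square = 2 * ENNReal.ofReal (1 / 2) := by
    rw [Real.volume_pi_Ioo, ← ENNReal.ofReal_ofNat 2, ← ENNReal.ofReal_mul zero_le_two]
    norm_num
  rw [hsquare] at hle
  exact (ENNReal.mul_le_mul_iff_right two_ne_zero ENNReal.ofNat_ne_top).1 hle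

lemma doubleArea_le_volume_image (x y z : Fin 2 → ℝ) :
    ENNReal.ofReal (|doubleArea x y z| / 2) ≤
      volume ((fun p : Fin 2 → ℝ => x + (p 0 • (y - x) + p 1 • (z - x))) '' standardTriangle) := by
  let M : Matrix (Fin 2) (Fin 2) ℝ := (Matrix.of ![y - x, z - x]).transpose
  have hdet : LinearMap.det M.toLin' = doubleArea x y z := by
    simp [M, LinearMap.det_toLin', Matrix.det_fin_two, doubleArea, wedge]
  have himage : (fun p : Fin 2 → ℝ => x + (p 0 • (y - x) + p 1 • (z - x))) '' standardTriangle =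
      (x + ·) '' (Matrix.toLin' M '' standardTriangle) := by
    rw [Set.image_image]
    simp only [M, Matrix.toLin'_apply, Matrix.mulVec_transpose, Matrix.vecMul_eq_sum,
      Fin.sum_univ_two]
    rfl
  rw [himage, Set.image_add_left, measure_preimage_add, Measure.addHaar_image_linearMap, hdet,
    div_eq_mul_one_div, ENNReal.ofReal_mul (abs_nonneg _)]
  gcongr
  exact half_le_volume_standardTriangle

lemma doubleArea_le_volume_inter {S : Set (Fin 2 → ℝ)} (hS : Convex ℝ S) {x y z : Fin 2 → ℝ}
    (hx : x ∈ S) (hy : y ∈ S) (hz : z ∈ S) :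
    ENNReal.ofReal (doubleArea x y z / 2) ≤ volume (S ∩ {u | 0 < doubleArea x y u}) := by
  rcases le_or_gt (doubleArea x y z) 0 with hneg | hpos
  · simp [ENNReal.ofReal_of_nonpos (by linarith : doubleArea x y z / 2 ≤ 0)]
  nth_rewrite 1 [← abs_of_pos hpos]
  refine (doubleArea_le_volume_image x y z).trans (measure_mono ?_)
  rintro _ ⟨p, ⟨hp0, hp1, hp⟩, rfl⟩
  constructor
  · have hcomb : x + (p 0 • (y - x) + p 1 • (z - x)) =
        (1 - p 0 - p 1) • x + p 0 • y + p 1 • z := by module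
    have hsum := hS.sum_mem (t := Finset.univ) (w := ![1 - p 0 - p 1, p 0, p 1]) (z := ![x, y, z])
      (by intro i _; fin_cases i <;> simp <;> linarith)
      (by simp only [Fin.sum_univ_three, Matrix.cons_val]; ring)
      (by intro i _; fin_cases i <;> simpa)
    simpa [Fin.sum_univ_three, hcomb] using hsum
  · have hlinear : doubleArea x y (x + (p 0 • (y - x) + p 1 • (z - x))) =
        p 1 * doubleArea x y z := by
      simp [doubleArea, wedge]; ring
    rw [Set.mem_ofPred_eq, hlinear]
    exact mul_pos hp1 hpos

lemma doubleArea_sub_le_volume {S : Set (Fin 2 → ℝ)} (hS : Convex ℝ S) {x y z w : Fin 2 → ℝ}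
    (hx : x ∈ S) (hy : y ∈ S) (hz : z ∈ S) (hw : w ∈ S) :
    ENNReal.ofReal ((doubleArea x y z - doubleArea x y w) / 2) ≤ volume S := by
  have hmeas : MeasurableSet {u | 0 < doubleArea x y u} := by
    refine (isOpen_lt continuous_const ?_).measurableSet
    unfold doubleArea wedge
    fun_prop
  have hopposite : S ∩ {u | 0 < doubleArea y x u} ⊆ S \ {u | 0 < doubleArea x y u} := by
    rintro u ⟨huS, hu⟩
    rw [Set.mem_ofPred_eq, doubleArea_swap] at hu
    exact ⟨huS, (neg_pos.1 hu).not_gt⟩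
  calc ENNReal.ofReal ((doubleArea x y z - doubleArea x y w) / 2)
      = ENNReal.ofReal (doubleArea x y z / 2 + doubleArea y x w / 2) := by
        rw [doubleArea_swap x y w]; congr 1; ring
    _ ≤ ENNReal.ofReal (doubleArea x y z / 2) + ENNReal.ofReal (doubleArea y x w / 2) :=
        ENNReal.ofReal_add_le
    _ ≤ volume (S ∩ {u | 0 < doubleArea x y u}) + volume (S \ {u | 0 < doubleArea x y u}) :=
        add_le_add (doubleArea_le_volume_inter hS hx hy hz)
          ((doubleArea_le_volume_inter hS hy hx hw).trans (measure_mono hopposite))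
    _ = volume S := measure_inter_add_sdiff S hmeas

/-- The Newton polytope of a Laurent polynomial with support `A`. -/
def newtonPolytope {ι : Type*} (A : Finset (ι → ℤ)) : Set (ι → ℝ) :=
  convexHull ℝ ((fun (α : ι → ℤ) (j : ι) => (α j : ℝ)) '' A)

lemma HasQuadrilateral.le_volume_newtonPolytope {A : Finset (Fin 2 → ℤ)} {K : ℤ}
    (h : HasQuadrilateral A K) : ENNReal.ofReal (K / 2) ≤ volume (newtonPolytope A) := by
  obtain ⟨X, hX, Y, hY, Z, hZ, W, hW, hK⟩ := h
  have hmem : ∀ α ∈ A, (fun j => (α j : ℝ)) ∈ newtonPolytope A :=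
    fun α hα => subset_convexHull ℝ _ ⟨α, hα, rfl⟩
  refine le_trans ?_ (doubleArea_sub_le_volume (convex_convexHull ℝ _) (hmem X hX) (hmem Y hY)
    (hmem Z hZ) (hmem W hW))
  gcongr
  rw [doubleArea_intCast, doubleArea_intCast]
  exact_mod_cast hK

end Area

section Classification

lemma exists_eq_smul_isCoprime {v : Fin 2 → ℤ} (hv : v ≠ 0) :
    ∃ g : ℤ, 0 < g ∧ ∃ e : Fin 2 → ℤ, IsCoprime (e 0) (e 1) ∧ v = g • e := by
  have hgcd : 0 < Int.gcd (v 0) (v 1) := by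
    rw [Int.gcd_pos_iff]
    by_contra! h
    exact hv (funext (Fin.forall_fin_two.2 h))
  obtain ⟨g, m, n, hg, hcoprime, hm, hn⟩ := Int.exists_gcd_one' hgcd
  refine ⟨g, by exact_mod_cast hg, ![m, n], Int.isCoprime_iff_gcd_eq_one.2 hcoprime, ?_⟩
  funext j
  fin_cases j
  · simpa [mul_comm] using hm
  · simpa [mul_comm] using hn

variable {A : Finset (Fin 2 → ℤ)} {P Q R : Fin 2 → ℤ}

/-- If `A` is not thin, two of its points have distance at least two with respect to the primitive
direction of `PQ`. -/
lemma isThin_or_hasQuadrilateral_of_dvd (hP : P ∈ A) (hQ : Q ∈ A) (hPQ : P ≠ Q) {D : ℤ}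
    (hD : ∀ j, D ∣ Q j - P j) : IsThin A ∨ HasQuadrilateral A (2 * D) := by
  obtain ⟨g, hg, e, he, hge⟩ := exists_eq_smul_isCoprime (sub_ne_zero.2 hPQ.symm)
  have hge' : ∀ j, Q j - P j = g * e j := fun j => congrFun hge j
  have hDg : D ≤ g := by
    obtain ⟨u, v, huv⟩ := he
    apply Int.le_of_dvd hg
    have hcomb : g = u * (Q 0 - P 0) + v * (Q 1 - P 1) := by
      rw [hge', hge']
      linear_combination (-g) * huv
    rw [hcomb]
    exact dvd_add ((hD 0).mul_left u) ((hD 1).mul_left v)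
  by_contra! ⟨hthin, hquad⟩
  apply hthin
  refine ⟨e, he, fun X hX Y hY => not_lt.1 fun hXY => hquad ⟨P, hP, Q, hQ, Y, hY, X, hX, ?_⟩⟩
  have hdiff : doubleArea P Q Y - doubleArea P Q X = g * wedge e (Y - X) := by
    simp only [doubleArea, wedge, Pi.sub_apply]
    linear_combination (Y 1 - X 1) * hge' 0 - (Y 0 - X 0) * hge' 1
  rw [hdiff]
  nlinarith

lemma isThin_of_doubleArea_eq_zero
    (h : ∀ X ∈ A, ∀ Y ∈ A, ∀ Z ∈ A, doubleArea X Y Z = 0) : IsThin A := by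
  rcases (A : Set (Fin 2 → ℤ)).subsingleton_or_nontrivial with hsub | ⟨P, hP, Q, hQ, hPQ⟩
  · refine ⟨![1, 0], by simpa using isCoprime_one_left, fun X hX Y hY => ?_⟩
    simp [hsub hX hY, wedge]
  · refine (isThin_or_hasQuadrilateral_of_dvd hP hQ hPQ fun _ => one_dvd _).resolve_right ?_
    rintro ⟨X, hX, Y, hY, Z, hZ, W, hW, hK⟩
    rw [h X hX Y hY Z hZ, h X hX Y hY W hW] at hK
    norm_num at hK

lemma doubleArea_eq_three_mul_wedge {C : Fin 2 → ℤ} (hC : P + Q + R = (3 : ℤ) • C) :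
    doubleArea P Q R = 3 * wedge (P - C) (Q - C) := by
  have hR : R = (3 : ℤ) • C - P - Q := by rw [← hC]; abel
  simp only [doubleArea, wedge, hR, Pi.sub_apply, Pi.smul_apply, smul_eq_mul]
  ring

/-- The barycentric coordinates of `X`, scaled to have sum `3`, are congruent modulo `3`. -/
lemma eq_vertex_or_eq_centroid {C X : Fin 2 → ℤ} (hC : P + Q + R = (3 : ℤ) • C)
    (hD : doubleArea P Q R = 3) (hPQ : 0 ≤ doubleArea P Q X) (hQR : 0 ≤ doubleArea Q R X)
    (hRP : 0 ≤ doubleArea R P X) : X = P ∨ X = Q ∨ X = R ∨ X = C := by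
  have hcongr : doubleArea Q R X - doubleArea R P X = 3 * doubleArea C R X := by
    have hR : R = (3 : ℤ) • C - P - Q := by rw [← hC]; abel
    simp only [doubleArea, wedge, hR, Pi.sub_apply, Pi.smul_apply, smul_eq_mul]
    ring
  have hsum := doubleArea_add_add P Q R X
  have hbary := doubleArea_smul P Q R X
  rw [hD] at hsum hbary
  generalize doubleArea Q R X = a at *
  generalize doubleArea R P X = b at *
  generalize doubleArea P Q X = c at *
  have hcases : (a = 3 ∧ b = 0 ∧ c = 0) ∨ (a = 0 ∧ b = 3 ∧ c = 0) ∨ (a = 0 ∧ b = 0 ∧ c = 3) ∨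
      (a = 1 ∧ b = 1 ∧ c = 1) := by
    have ha : a ≤ 3 := by omega
    interval_cases a <;> omega
  have hcancel : ∀ Y : Fin 2 → ℤ, (3 : ℤ) • X = (3 : ℤ) • Y → X = Y :=
    fun Y hY => smul_right_injective _ three_ne_zero hY
  rcases hcases with ⟨rfl, rfl, rfl⟩ | ⟨rfl, rfl, rfl⟩ | ⟨rfl, rfl, rfl⟩ | ⟨rfl, rfl, rfl⟩
  · exact .inl (hcancel P (by simpa using hbary))
  · exact .inr (.inl (hcancel Q (by simpa using hbary)))
  · exact .inr (.inr (.inl (hcancel R (by simpa using hbary))))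
  · exact .inr (.inr (.inr (hcancel C (by simpa [← hC] using hbary))))

lemma intCast_eq_zero_iff_dvd (n : ℕ) (u : Fin 2 → ℤ) :
    (fun j => (u j : ZMod n)) = 0 ↔ ∀ j, (n : ℤ) ∣ u j := by
  simp [funext_iff, ZMod.intCast_zmod_eq_zero_iff_dvd]

lemma wedge_intCast_eq_zero {n : ℕ} (h : (n : ℤ) ∣ doubleArea P Q R) :
    wedge (fun j => ((Q j - P j : ℤ) : ZMod n)) (fun j => ((R j - Q j : ℤ) : ZMod n)) = 0 := by
  have hshift : wedge (Q - P) (R - Q) = doubleArea P Q R := by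
    simp only [doubleArea, wedge, Pi.sub_apply]; ring
  exact (wedge_intCast _ _).trans
    ((ZMod.intCast_zmod_eq_zero_iff_dvd _ n).2 (hshift ▸ h))

lemma two_dvd_edge_of_two_dvd_doubleArea (h : 2 ∣ doubleArea P Q R) :
    (∀ j, 2 ∣ Q j - P j) ∨ (∀ j, 2 ∣ R j - Q j) ∨ (∀ j, 2 ∣ P j - R j) := by
  have hdep : ∀ u v : Fin 2 → ZMod 2, wedge u v = 0 → u = 0 ∨ v = 0 ∨ -u - v = 0 := by decide
  refine (hdep _ _ (wedge_intCast_eq_zero (n := 2) h)).imp (intCast_eq_zero_iff_dvd 2 _).1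
    (.imp (intCast_eq_zero_iff_dvd 2 _).1 fun hsum => (intCast_eq_zero_iff_dvd 2 _).1 ?_)
  rw [← hsum]
  funext j
  push_cast [Pi.sub_apply, Pi.neg_apply]
  ring

lemma three_dvd_edge_or_sum_of_three_dvd_doubleArea (h : 3 ∣ doubleArea P Q R) :
    ((∀ j, 3 ∣ Q j - P j) ∨ (∀ j, 3 ∣ R j - Q j) ∨ (∀ j, 3 ∣ P j - R j)) ∨
      ∀ j, 3 ∣ P j + Q j + R j := by
  have hdep : ∀ u v : Fin 2 → ZMod 3, wedge u v = 0 →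
      (u = 0 ∨ v = 0 ∨ -u - v = 0) ∨ v - u = 0 := by decide
  refine (hdep _ _ (wedge_intCast_eq_zero (n := 3) h)).imp
    (.imp (intCast_eq_zero_iff_dvd 3 _).1 (.imp (intCast_eq_zero_iff_dvd 3 _).1 fun hsum =>
      (intCast_eq_zero_iff_dvd 3 _).1 ?_)) fun hsum => (intCast_eq_zero_iff_dvd 3 _).1 ?_
  · rw [← hsum]
    funext j
    push_cast [Pi.sub_apply, Pi.neg_apply]
    ring
  · rw [← hsum]
    funext j
    have hthree : (3 : ZMod 3) = 0 := rfl
    push_cast [Pi.sub_apply]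
    linear_combination (Q j : ZMod 3) * hthree

/-- `PQR` is a triangle, possibly degenerate, with vertices in `A` of largest signed area. -/
structure IsMaximalTriangle (A : Finset (Fin 2 → ℤ)) (P Q R : Fin 2 → ℤ) : Prop where
  fst_mem : P ∈ A
  snd_mem : Q ∈ A
  trd_mem : R ∈ A
  doubleArea_le : ∀ X ∈ A, ∀ Y ∈ A, ∀ Z ∈ A, doubleArea X Y Z ≤ doubleArea P Q R

namespace IsMaximalTriangle

lemma rotate (h : IsMaximalTriangle A P Q R) : IsMaximalTriangle A Q R P :=
  ⟨h.snd_mem, h.trd_mem, h.fst_mem, by simpa only [doubleArea_rotate] using h.doubleArea_le⟩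

lemma reflection_mem (h : IsMaximalTriangle A P Q R) (hD : doubleArea P Q R = 1)
    (hthin : ¬IsThin A) : P + Q - R ∈ A := by
  have hcoprime : IsCoprime ((Q - P) 0) ((Q - P) 1) :=
    ⟨(R - P) 1, -(R - P) 0, by rw [← hD]; simp only [doubleArea, wedge]; ring⟩
  obtain ⟨X, hX, Y, hY, hXY⟩ : ∃ X ∈ A, ∃ Y ∈ A, 1 < wedge (Q - P) (Y - X) := by
    by_contra! hle
    exact hthin ⟨_, hcoprime, hle⟩
  have hdiff : wedge (Q - P) (Y - X) = doubleArea P Q Y - doubleArea P Q X := by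
    simp only [doubleArea, wedge, Pi.sub_apply]; ring
  have hY' := h.doubleArea_le P h.fst_mem Q h.snd_mem Y hY
  have hP' := h.doubleArea_le Q h.snd_mem R h.trd_mem X hX
  have hQ' := h.doubleArea_le R h.trd_mem P h.fst_mem X hX
  have hsum := doubleArea_add_add P Q R X
  have hbary := doubleArea_smul P Q R X
  rw [hD, show doubleArea Q R X = 1 by omega, show doubleArea R P X = 1 by omega,
    show doubleArea P Q X = -1 by omega] at hbary
  have hXeq : X = P + Q - R := by simpa [sub_eq_add_neg] using hbary
  exact hXeq ▸ hX

/-- Otherwise `A` contains the reflections of the vertices in the midpoints of the opposite sides,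
which span a triangle of four times the area. -/
lemma isThin_of_doubleArea_eq_one (h : IsMaximalTriangle A P Q R) (hD : doubleArea P Q R = 1) :
    IsThin A := by
  by_contra hthin
  have hle := h.doubleArea_le _ (h.reflection_mem hD hthin)
    _ (h.rotate.reflection_mem (by rwa [doubleArea_rotate]) hthin)
    _ (h.rotate.rotate.reflection_mem (by rwa [doubleArea_rotate, doubleArea_rotate]) hthin)
  have hfour : doubleArea (P + Q - R) (Q + R - P) (R + P - Q) = 4 * doubleArea P Q R := by
    simp only [doubleArea, wedge, Pi.sub_apply, Pi.add_apply]; ring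
  omega

lemma isExceptionalTriangle_or_hasQuadrilateral (h : IsMaximalTriangle A P Q R)
    (hD : doubleArea P Q R = 3) {C : Fin 2 → ℤ} (hC : P + Q + R = (3 : ℤ) • C) :
    IsExceptionalTriangle A ∨ HasQuadrilateral A 4 := by
  by_contra! ⟨hexc, hquad⟩
  have hnonneg : ∀ {P Q R}, IsMaximalTriangle A P Q R → doubleArea P Q R = 3 → ∀ X ∈ A,
      0 ≤ doubleArea P Q X := by
    intro P Q R h hD X hX
    by_contra! hneg
    exact hquad ⟨P, h.fst_mem, Q, h.snd_mem, R, h.trd_mem, X, hX, by omega⟩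
  have hunit : wedge (P - C) (Q - C) = 1 := by
    have := doubleArea_eq_three_mul_wedge hC
    omega
  refine hexc ⟨P, Q, R, C, ⟨h.fst_mem, h.snd_mem, h.trd_mem⟩, hC, hunit, fun X hX => ?_⟩
  exact eq_vertex_or_eq_centroid hC hD (hnonneg h hD X hX)
    (hnonneg h.rotate (by rwa [doubleArea_rotate]) X hX)
    (hnonneg h.rotate.rotate (by rwa [doubleArea_rotate, doubleArea_rotate]) X hX)

lemma isThin_or_hasQuadrilateral_of_edge_dvd (h : IsMaximalTriangle A P Q R)
    (hne : doubleArea P Q R ≠ 0) {n : ℤ} (hn : 2 ≤ n)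
    (hdvd : (∀ j, n ∣ Q j - P j) ∨ (∀ j, n ∣ R j - Q j) ∨ (∀ j, n ∣ P j - R j)) :
    IsThin A ∨ HasQuadrilateral A 4 := by
  have hedge : ∀ {P Q R}, IsMaximalTriangle A P Q R → doubleArea P Q R ≠ 0 →
      (∀ j, n ∣ Q j - P j) → IsThin A ∨ HasQuadrilateral A 4 := by
    intro P Q R h hne hdvd
    have hPQ : P ≠ Q := by
      rintro rfl
      exact hne (by simp [doubleArea, wedge])
    exact (isThin_or_hasQuadrilateral_of_dvd h.fst_mem h.snd_mem hPQ hdvd).imp_right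
      (·.mono (by omega))
  rcases hdvd with hdvd | hdvd | hdvd
  · exact hedge h hne hdvd
  · exact hedge h.rotate (by rwa [doubleArea_rotate]) hdvd
  · exact hedge h.rotate.rotate (by rwa [doubleArea_rotate, doubleArea_rotate]) hdvd

end IsMaximalTriangle

theorem isThin_or_isExceptionalTriangle_or_hasQuadrilateral (hA : A.Nonempty) :
    IsThin A ∨ IsExceptionalTriangle A ∨ HasQuadrilateral A 4 := by
  obtain ⟨⟨P, Q, R⟩, hmem, hmax⟩ := (A ×ˢ A ×ˢ A).exists_max_image
    (fun t => doubleArea t.1 t.2.1 t.2.2) (by simp [hA])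
  simp only [Finset.mem_product] at hmem hmax
  obtain ⟨hP, hQ, hR⟩ := hmem
  have h : IsMaximalTriangle A P Q R :=
    ⟨hP, hQ, hR, fun X hX Y hY Z hZ => hmax (X, Y, Z) ⟨hX, hY, hZ⟩⟩
  have hdegenerate : doubleArea P Q P = 0 := by simp [doubleArea, wedge]
  have hnonneg : 0 ≤ doubleArea P Q R := hdegenerate ▸ h.doubleArea_le P hP Q hQ P hP
  obtain hD | hD | hD | hD | hD : doubleArea P Q R = 0 ∨ doubleArea P Q R = 1 ∨
      doubleArea P Q R = 2 ∨ doubleArea P Q R = 3 ∨ 4 ≤ doubleArea P Q R := by omega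
  · refine .inl (isThin_of_doubleArea_eq_zero fun X hX Y hY Z hZ => ?_)
    have hXY := h.doubleArea_le X hX Y hY Z hZ
    have hYX := h.doubleArea_le Y hY X hX Z hZ
    rw [doubleArea_swap] at hYX
    omega
  · exact .inl (h.isThin_of_doubleArea_eq_one hD)
  · refine (h.isThin_or_hasQuadrilateral_of_edge_dvd (by omega) le_rfl ?_).imp_right .inr
    exact two_dvd_edge_of_two_dvd_doubleArea (by omega)
  · rcases three_dvd_edge_or_sum_of_three_dvd_doubleArea hD.symm.dvd with hedge | hsum
    · exact (h.isThin_or_hasQuadrilateral_of_edge_dvd (by omega) (by norm_num) hedge).imp_right .inr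
    · choose C hC using hsum
      exact .inr (h.isExceptionalTriangle_or_hasQuadrilateral hD (funext hC))
  · exact .inr (.inr ⟨P, hP, Q, hQ, R, hR, P, hP, by omega⟩)

end Classification

end PlaneGeometry

section RealZeros

open Polynomial

lemma encard_setOf_im_eval_eq_zero_le {r : ℂ[X]} (hr : r.leadingCoeff.im ≠ 0) :
    {s : ℝ | (r.eval (s : ℂ)).im = 0}.encard ≤ r.natDegree := by
  set g : ℂ[X] := r - r.map (starRingEnd ℂ)
  have hg : g ≠ 0 := by
    intro h
    have hcoeff : g.coeff r.natDegree = 0 := by rw [h, coeff_zero]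
    rw [coeff_sub, coeff_map, coeff_natDegree, sub_eq_zero] at hcoeff
    exact hr (conj_eq_iff_im.1 hcoeff.symm)
  have hdeg : g.natDegree ≤ r.natDegree :=
    (natDegree_sub_le _ _).trans (max_le le_rfl natDegree_map_le)
  have hroot : Set.MapsTo ofReal {s : ℝ | (r.eval (s : ℂ)).im = 0} (g.rootSet ℂ) := by
    intro s hs
    have hconj : (r.map (starRingEnd ℂ)).eval (s : ℂ) = conj (r.eval (s : ℂ)) := by
      rw [← conj_ofReal s, eval_map_apply, conj_ofReal]
    rw [mem_rootSet]
    refine ⟨hg, ?_⟩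
    rw [coe_aeval_eq_eval, eval_sub, hconj, conj_eq_iff_im.2 hs, sub_self]
  calc {s : ℝ | (r.eval (s : ℂ)).im = 0}.encard
      ≤ (g.rootSet ℂ).encard := Set.encard_le_encard_of_injOn hroot ofReal_injective.injOn
    _ = (g.rootSet ℂ).ncard := (g.rootSet_finite ℂ).cast_ncard_eq.symm
    _ ≤ r.natDegree := by exact_mod_cast (g.ncard_rootSet_le ℂ).trans hdeg

/-- If `p(s) + t q(s) = 0` with `s` and `t` real, then `p(s) * conj (q(s))` is real. -/
lemma encard_setOf_eval_add_mul_eval_eq_zero_le {p q : ℂ[X]}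
    (hlead : (conj q.leadingCoeff * p.leadingCoeff).im ≠ 0)
    (hq : ∀ s : ℝ, s ≠ 0 → q.eval (s : ℂ) ≠ 0) :
    {x : ℝ × ℝ | x.1 ≠ 0 ∧ p.eval (x.1 : ℂ) + x.2 * q.eval (x.1 : ℂ) = 0}.encard ≤
      p.natDegree + q.natDegree := by
  set r : ℂ[X] := p * q.map (starRingEnd ℂ)
  have hr : r.leadingCoeff.im ≠ 0 := by
    rwa [leadingCoeff_mul, leadingCoeff_map, mul_comm]
  have hinj : Set.InjOn Prod.fst
      {x : ℝ × ℝ | x.1 ≠ 0 ∧ p.eval (x.1 : ℂ) + x.2 * q.eval (x.1 : ℂ) = 0} := by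
    rintro ⟨s, t⟩ ⟨hs, ht⟩ ⟨s', t'⟩ ⟨-, ht'⟩ rfl
    have heq : (t : ℂ) = t' := mul_right_cancel₀ (hq s hs) (by linear_combination ht - ht')
    rw [ofReal_inj.1 heq]
  have hreal : Set.MapsTo Prod.fst
      {x : ℝ × ℝ | x.1 ≠ 0 ∧ p.eval (x.1 : ℂ) + x.2 * q.eval (x.1 : ℂ) = 0}
      {s : ℝ | (r.eval (s : ℂ)).im = 0} := by
    rintro ⟨s, t⟩ ⟨-, ht⟩
    have hconj : (q.map (starRingEnd ℂ)).eval (s : ℂ) = conj (q.eval (s : ℂ)) := by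
      rw [← conj_ofReal s, eval_map_apply, conj_ofReal]
    rw [Set.mem_ofPred_eq, eval_mul, hconj, eq_neg_of_add_eq_zero_left ht, ← neg_mul, mul_assoc,
      mul_conj, ← ofReal_neg, ← ofReal_mul, ofReal_im]
  calc {x : ℝ × ℝ | x.1 ≠ 0 ∧ p.eval (x.1 : ℂ) + x.2 * q.eval (x.1 : ℂ) = 0}.encard
      ≤ {s : ℝ | (r.eval (s : ℂ)).im = 0}.encard := Set.encard_le_encard_of_injOn hreal hinj
    _ ≤ r.natDegree := encard_setOf_im_eval_eq_zero_le hr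
    _ ≤ p.natDegree + q.natDegree := by
        exact_mod_cast natDegree_mul_le.trans (Nat.add_le_add_left natDegree_map_le _)

lemma encard_setOf_eval_mul_add_mul_eval_mul_eq_zero_le {p q : ℂ[X]} {u v : ℂ} (hu : u ≠ 0)
    (hv : v ≠ 0) (hlead : (conj (q.leadingCoeff * (v * u ^ q.natDegree)) *
      (p.leadingCoeff * u ^ p.natDegree)).im ≠ 0)
    (hq : ∀ s : ℝ, s ≠ 0 → q.eval (s * u) ≠ 0) :
    {x : ℝ × ℝ | x.1 ≠ 0 ∧ p.eval (x.1 * u) + x.2 * v * q.eval (x.1 * u) = 0}.encard ≤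
      p.natDegree + q.natDegree := by
  have hdegX : (C u * X).natDegree = 1 := natDegree_C_mul_X u hu
  have hdegp : (p.comp (C u * X)).natDegree = p.natDegree := by
    rw [natDegree_comp, hdegX, mul_one]
  have hdegq : (C v * q.comp (C u * X)).natDegree = q.natDegree := by
    rw [natDegree_C_mul hv, natDegree_comp, hdegX, mul_one]
  have heval : ∀ (r : ℂ[X]) (s : ℝ), (r.comp (C u * X)).eval (s : ℂ) = r.eval (s * u) := by
    intro r s
    rw [eval_comp, eval_mul, eval_C, eval_X, mul_comm]
  rw [← hdegp, ← hdegq]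
  convert encard_setOf_eval_add_mul_eval_eq_zero_le ?_ ?_ using 3
  · ext x
    rw [eval_mul, eval_C, heval, heval, mul_assoc]
  · simp only [leadingCoeff_mul, leadingCoeff_comp (hdegX.trans_ne one_ne_zero), leadingCoeff_C,
      leadingCoeff_X, mul_one]
    rwa [mul_left_comm v]
  · intro s hs
    rw [eval_mul, eval_C, heval]
    exact mul_ne_zero hv (hq s hs)

end RealZeros

section Unimodular

variable {G : Type*} [CommGroup G]

lemma zpow_mul_zpow_comp (a b : G) (i j k l m n : ℤ) :
    (a ^ i * b ^ j) ^ k * (a ^ l * b ^ m) ^ n = a ^ (i * k + l * n) * b ^ (j * k + m * n) := by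
  simp only [mul_zpow, zpow_add, zpow_mul]
  exact mul_mul_mul_comm _ _ _ _

lemma laurentMonomial_bijective_of_wedge_eq_one {e e' : Fin 2 → ℤ} (h : wedge e e' = 1) :
    Function.Bijective fun x : Fin 2 → G => (laurentMonomial x e, laurentMonomial x e') := by
  have hdet : e 0 * e' 1 - e 1 * e' 0 = 1 := h
  refine Function.bijective_iff_has_inverse.2
    ⟨fun y => ![y.1 ^ e' 1 * y.2 ^ (-e 1), y.1 ^ (-e' 0) * y.2 ^ e 0], fun x => ?_, fun y => ?_⟩
  · funext j
    fin_cases j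
    · simp only [laurentMonomial, Fin.prod_univ_two, zpow_mul_zpow_comp]
      rw [show e 0 * e' 1 + e' 0 * -e 1 = 1 by linear_combination hdet,
        show e 1 * e' 1 + e' 1 * -e 1 = 0 by ring]
      simp
    · simp only [laurentMonomial, Fin.prod_univ_two, zpow_mul_zpow_comp]
      rw [show e 0 * -e' 0 + e' 0 * e 0 = 0 by ring,
        show e 1 * -e' 0 + e' 1 * e 0 = 1 by linear_combination hdet]
      simp
  · simp only [laurentMonomial, Fin.prod_univ_two, Matrix.cons_val, zpow_mul_zpow_comp]
    rw [show e' 1 * e 0 + -e' 0 * e 1 = 1 by linear_combination hdet,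
      show -e 1 * e 0 + e 0 * e 1 = 0 by ring, show e' 1 * e' 0 + -e' 0 * e' 1 = 0 by ring,
      show -e 1 * e' 0 + e 0 * e' 1 = 1 by linear_combination hdet]
    simp

end Unimodular

section Factorization

open Polynomial

lemma exists_laurentEval_eq_mul_eval {ι : Type*} [Fintype ι] {B : Finset (ι → ℤ)}
    {a : (ι → ℤ) → ℂ} {P e : ι → ℤ} (hB : B.Nonempty) (ha : ∀ α ∈ B, a α ≠ 0)
    (hline : ∀ α ∈ B, ∃ k : ℤ, α = P + k • e) :
    ∃ P₀ ∈ B, ∃ p : ℂ[X], p ≠ 0 ∧ P₀ + (p.natDegree : ℤ) • e ∈ B ∧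
      ∀ z, laurentEval B a z =
        (laurentMonomial z P₀ : ℂˣ) * p.eval ((laurentMonomial z e : ℂˣ) : ℂ) := by
  choose! k hk using hline
  obtain ⟨P₀, hP₀, hmin⟩ := B.exists_min_image k hB
  obtain ⟨d, hd⟩ : ∃ d : (ι → ℤ) → ℕ, ∀ α ∈ B, α = P₀ + (d α : ℤ) • e := by
    refine ⟨fun α => (k α - k P₀).toNat, fun α hα => ?_⟩
    rw [Int.toNat_of_nonneg (sub_nonneg.2 (hmin α hα)), sub_smul]
    nth_rewrite 1 [hk α hα, hk P₀ hP₀]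
    abel
  have hinj : ∀ α ∈ B, ∀ β ∈ B, d α = d β → α = β := fun α hα β hβ h => by
    rw [hd α hα, hd β hβ, h]
  set p : ℂ[X] := ∑ α ∈ B, monomial (d α) (a α)
  have hp : p ≠ 0 := by
    intro h
    have hcoeff : p.coeff (d P₀) = a P₀ := by
      rw [finsetSum_coeff, Finset.sum_eq_single_of_mem P₀ hP₀, coeff_monomial_same]
      exact fun β hβ hne => coeff_monomial_of_ne _ fun h => hne (hinj β hβ P₀ hP₀ h.symm)
    exact ha P₀ hP₀ (by rw [← hcoeff, h, coeff_zero])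
  refine ⟨P₀, hP₀, p, hp, ?_, fun z => ?_⟩
  · obtain ⟨α, hα, hne⟩ : ∃ α ∈ B, (monomial (d α) (a α)).coeff p.natDegree ≠ 0 := by
      apply Finset.exists_ne_zero_of_sum_ne_zero
      rw [← finsetSum_coeff]
      exact leadingCoeff_ne_zero.2 hp
    have hdα : d α = p.natDegree := by
      by_contra h
      exact hne (coeff_monomial_of_ne _ (Ne.symm h))
    rwa [← hdα, ← hd α hα]
  · rw [eval_finsetSum, Finset.mul_sum, laurentEval]
    refine Finset.sum_congr rfl fun α hα => ?_
    nth_rewrite 2 [hd α hα]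
    rw [laurentMonomial_add, laurentMonomial_zsmul, zpow_natCast, eval_monomial, Units.val_mul,
      Units.val_pow_eq_pow_val]
    ring

lemma exists_eq_zsmul_of_wedge_eq_zero {e v : Fin 2 → ℤ} (he : IsCoprime (e 0) (e 1))
    (h : wedge e v = 0) : ∃ k : ℤ, v = k • e := by
  obtain ⟨m, n, hmn⟩ := he
  have hdet : e 0 * v 1 - e 1 * v 0 = 0 := h
  refine ⟨m * v 0 + n * v 1, funext fun j => ?_⟩
  fin_cases j
  · simp only [Pi.smul_apply, smul_eq_mul, Fin.zero_eta]
    linear_combination -v 0 * hmn - n * hdet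
  · simp only [Pi.smul_apply, smul_eq_mul, Fin.mk_one]
    linear_combination -v 1 * hmn + m * hdet

lemma exists_laurentEval_filter_eq {A : Finset (Fin 2 → ℤ)} {a : (Fin 2 → ℤ) → ℂ}
    (ha : ∀ α ∈ A, a α ≠ 0) {e X P : Fin 2 → ℤ} (he : IsCoprime (e 0) (e 1)) (hP : P ∈ A) {i : ℤ}
    (hi : wedge e (P - X) = i) :
    ∃ P₀ ∈ A, wedge e (P₀ - X) = i ∧ ∃ p : ℂ[X], p ≠ 0 ∧ P₀ + (p.natDegree : ℤ) • e ∈ A ∧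
      ∀ z, laurentEval {α ∈ A | wedge e (α - X) = i} a z =
        (laurentMonomial z P₀ : ℂˣ) * p.eval ((laurentMonomial z e : ℂˣ) : ℂ) := by
  have hline : ∀ α ∈ ({α ∈ A | wedge e (α - X) = i} : Finset _), ∃ k : ℤ, α = P + k • e := by
    intro α hα
    have hwedge : wedge e (α - P) = 0 := by
      have hsub : wedge e (α - P) = wedge e (α - X) - wedge e (P - X) := by
        simp only [wedge, Pi.sub_apply]; ring
      rw [hsub, hi, (Finset.mem_filter.1 hα).2, sub_self]
    obtain ⟨k, hk⟩ := exists_eq_zsmul_of_wedge_eq_zero he hwedge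
    exact ⟨k, eq_add_of_sub_eq' hk⟩
  obtain ⟨P₀, hP₀, p, hp, hdeg, heval⟩ := exists_laurentEval_eq_mul_eval
    ⟨P, Finset.mem_filter.2 ⟨hP, hi⟩⟩ (fun α hα => ha α (Finset.mem_filter.1 hα).1) hline
  rw [Finset.mem_filter] at hP₀ hdeg
  exact ⟨P₀, hP₀.1, hP₀.2, p, hp, hdeg.1, heval⟩

lemma IsThin.exists_wedge_eq_zero_or_eq_one {A : Finset (Fin 2 → ℤ)} (h : IsThin A)
    (hA : A.Nonempty) : ∃ e : Fin 2 → ℤ, IsCoprime (e 0) (e 1) ∧ ∃ X ∈ A,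
      (∀ α ∈ A, wedge e (α - X) = 0) ∨
      (∃ Y ∈ A, wedge e (Y - X) = 1) ∧ ∀ α ∈ A, wedge e (α - X) = 0 ∨ wedge e (α - X) = 1 := by
  obtain ⟨e, he, hwidth⟩ := h
  have hsub : ∀ X Y, wedge e (Y - X) = wedge e Y - wedge e X := by
    intro X Y
    simp only [wedge, Pi.sub_apply]; ring
  obtain ⟨X, hX, hmin⟩ := A.exists_min_image (wedge e) hA
  refine ⟨e, he, X, hX, or_iff_not_imp_left.2 fun hne => ?_⟩
  have hcases : ∀ α ∈ A, wedge e (α - X) = 0 ∨ wedge e (α - X) = 1 := by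
    intro α hα
    have hge := hmin α hα
    have hle := hwidth X hX α hα
    rw [hsub] at hle ⊢
    omega
  push Not at hne
  obtain ⟨Y, hY, hYX⟩ := hne
  exact ⟨⟨Y, hY, (hcases Y hY).resolve_left hYX⟩, hcases⟩

lemma laurentEval_eq_filter_add_filter {A : Finset (Fin 2 → ℤ)} {e X : Fin 2 → ℤ}
    (h : ∀ α ∈ A, wedge e (α - X) = 0 ∨ wedge e (α - X) = 1) (a : (Fin 2 → ℤ) → ℂ)
    (z : Fin 2 → ℂˣ) :
    laurentEval A a z = laurentEval {α ∈ A | wedge e (α - X) = 0} a z +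
      laurentEval {α ∈ A | wedge e (α - X) = 1} a z := by
  have hone : ∀ α ∈ A, wedge e (α - X) = 1 ↔ ¬wedge e (α - X) = 0 := by
    intro α hα
    rcases h α hα with h | h <;> simp [h]
  rw [Finset.filter_congr hone]
  exact (Finset.sum_filter_add_sum_filter_not A _ _).symm

lemma IsThin.exists_laurentEval_eq {A : Finset (Fin 2 → ℤ)} {a : (Fin 2 → ℤ) → ℂ} (h : IsThin A)
    (hA : A.Nonempty) (ha : ∀ α ∈ A, a α ≠ 0) :
    (∃ P e : Fin 2 → ℤ, e ≠ 0 ∧ ∃ p : ℂ[X], p ≠ 0 ∧ ∀ z, laurentEval A a z =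
      (laurentMonomial z P : ℂˣ) * p.eval ((laurentMonomial z e : ℂˣ) : ℂ)) ∨
    ∃ P e e' : Fin 2 → ℤ, wedge e e' = 1 ∧ ∃ p q : ℂ[X], p ≠ 0 ∧ q ≠ 0 ∧
      HasQuadrilateral A (p.natDegree + q.natDegree) ∧ ∀ z, laurentEval A a z =
        (laurentMonomial z P : ℂˣ) * (p.eval ((laurentMonomial z e : ℂˣ) : ℂ) +
          (laurentMonomial z e' : ℂˣ) * q.eval ((laurentMonomial z e : ℂˣ) : ℂ)) := by
  obtain ⟨e, he, X, hX, hlines⟩ := h.exists_wedge_eq_zero_or_eq_one hA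
  have hXX : wedge e (X - X) = 0 := by simp [wedge]
  obtain ⟨P, hP, hP0, p, hp, hPp, hevalp⟩ := exists_laurentEval_filter_eq ha he hX hXX
  rcases hlines with hzero | ⟨⟨Y, hY, hY1⟩, hcases⟩
  · rw [Finset.filter_true_of_mem hzero] at hevalp
    exact .inl ⟨P, e, fun h => not_isCoprime_zero_zero (by simpa [h] using he), p, hp, hevalp⟩
  obtain ⟨Q, hQ, hQ1, q, hq, hQq, hevalq⟩ := exists_laurentEval_filter_eq ha he hY hY1
  have hdet : wedge e (Q - P) = 1 := by
    rw [← hQ1, ← sub_zero (wedge e (Q - X)), ← hP0]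
    simp only [wedge, Pi.sub_apply]; ring
  refine .inr ⟨P, e, Q - P, hdet, p, q, hp, hq, ⟨_, hPp, Q, hQ, P, hP, _, hQq, ?_⟩, fun z => ?_⟩
  · have hquad : doubleArea (P + (p.natDegree : ℤ) • e) Q P -
        doubleArea (P + (p.natDegree : ℤ) • e) Q (Q + (q.natDegree : ℤ) • e) =
        (p.natDegree + q.natDegree) * wedge e (Q - P) := by
      simp only [doubleArea, wedge, Pi.sub_apply, Pi.add_apply, Pi.smul_apply, smul_eq_mul]
      ring
    rw [hquad, hdet, mul_one]
  · rw [laurentEval_eq_filter_add_filter hcases, hevalp, hevalq, laurentMonomial_sub,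
      Units.val_mul, mul_add, ← mul_assoc, mul_left_comm, Units.mul_inv, mul_one]

end Factorization

section ThinCase

open Polynomial

lemma ae_realZeros_eq_empty {ι : Type*} [Fintype ι] {A : Finset (ι → ℤ)} {a : (ι → ℤ) → ℂ}
    {P e : ι → ℤ} (he : e ≠ 0) {p : ℂ[X]} (hp : p ≠ 0) (heval : ∀ z, laurentEval A a z =
      (laurentMonomial z P : ℂˣ) * p.eval ((laurentMonomial z e : ℂˣ) : ℂ)) :
    ∀ᵐ θ : Torus ι, realZeros A a θ = ∅ := by
  filter_upwards [ae_eval_mul_laurentMonomial_ne_zero he hp] with θ hθ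
  refine Set.eq_empty_iff_forall_notMem.2 fun x hx => ?_
  rw [realZeros, Set.mem_ofPred_eq, heval, coe_laurentMonomial_polar x θ e] at hx
  exact hθ _ (Units.ne_zero _) ((mul_eq_zero.1 hx).resolve_left (Units.ne_zero _))

lemma ae_encard_realZeros_le {A : Finset (Fin 2 → ℤ)} {a : (Fin 2 → ℤ) → ℂ}
    {P e e' : Fin 2 → ℤ} (hdet : wedge e e' = 1) {p q : ℂ[X]} (hp : p ≠ 0) (hq : q ≠ 0)
    (heval : ∀ z, laurentEval A a z =
      (laurentMonomial z P : ℂˣ) * (p.eval ((laurentMonomial z e : ℂˣ) : ℂ) +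
        (laurentMonomial z e' : ℂˣ) * q.eval ((laurentMonomial z e : ℂˣ) : ℂ))) :
    ∀ᵐ θ : Torus (Fin 2), (realZeros A a θ).encard ≤ p.natDegree + q.natDegree := by
  have he : e ≠ 0 := by
    rintro rfl
    simp [wedge] at hdet
  have hne : e' + (q.natDegree : ℤ) • e ≠ (p.natDegree : ℤ) • e := by
    intro h
    rw [eq_sub_of_add_eq h] at hdet
    simp only [wedge, Pi.sub_apply, Pi.smul_apply, smul_eq_mul] at hdet
    ring_nf at hdet
    omega
  filter_upwards [ae_eval_mul_laurentMonomial_ne_zero he hq, ae_im_conj_mul_ne_zero hne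
    (leadingCoeff_ne_zero.2 hq) (leadingCoeff_ne_zero.2 hp)] with θ hθ hlead
  rw [laurentMonomial_add, laurentMonomial_zsmul, laurentMonomial_zsmul, zpow_natCast,
    zpow_natCast, Circle.coe_mul, Circle.coe_pow, Circle.coe_pow] at hlead
  refine le_trans (Set.encard_le_encard_of_injOn (f := fun x =>
    (((laurentMonomial x e : ℝˣ) : ℝ), ((laurentMonomial x e' : ℝˣ) : ℝ))) ?_ ?_)
    (encard_setOf_eval_mul_add_mul_eval_mul_eq_zero_le (Circle.coe_ne_zero _)
      (Circle.coe_ne_zero _) hlead hθ)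
  · intro x hx
    refine ⟨Units.ne_zero _, ?_⟩
    rwa [realZeros, Set.mem_ofPred_eq, heval, mul_eq_zero, or_iff_right (Units.ne_zero _),
      coe_laurentMonomial_polar, coe_laurentMonomial_polar] at hx
  · intro x _ y _ hxy
    simp only [Prod.mk.injEq, Units.val_inj] at hxy
    exact (laurentMonomial_bijective_of_wedge_eq_one hdet).injective (Prod.ext hxy.1 hxy.2)

end ThinCase

section ExceptionalTriangle

lemma exists_units_mul_nonneg (r : ℝ) : ∃ σ : ℤˣ, 0 ≤ ((σ : ℤ) : ℝ) * r := by
  rcases le_total 0 r with h | h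
  · exact ⟨1, by simpa⟩
  · exact ⟨-1, by simpa⟩

lemma exists_quadrant_add_mul_add_mul_ne_zero (k : ℝ) {α : ℝ} (hα : α ≠ 0) (β : ℝ) :
    ∃ σ τ : ℤˣ, ∀ s t : ℝ, 0 < ((σ : ℤ) : ℝ) * s → 0 < ((τ : ℤ) : ℝ) * t →
      k + s * α + t * β ≠ 0 := by
  -- On a suitable quadrant the three terms have the same sign, and the middle one is nonzero.
  obtain ⟨ε, hε⟩ := exists_units_mul_nonneg k
  obtain ⟨σ, hσ⟩ := exists_units_mul_nonneg (((ε : ℤ) : ℝ) * α)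
  obtain ⟨τ, hτ⟩ := exists_units_mul_nonneg (((ε : ℤ) : ℝ) * β)
  refine ⟨σ, τ, fun s t hs ht hzero => ?_⟩
  have hsq : ∀ ρ : ℤˣ, ((ρ : ℤ) : ℝ) * ((ρ : ℤ) : ℝ) = 1 := fun ρ => by
    exact_mod_cast Int.units_coe_mul_self ρ
  have hσ' : 0 < ((σ : ℤ) : ℝ) * (((ε : ℤ) : ℝ) * α) := hσ.lt_of_ne (by simp [hα])
  have hpos : 0 < ((ε : ℤ) : ℝ) * (k + s * α + t * β) := by
    have hsplit : ((ε : ℤ) : ℝ) * (k + s * α + t * β) = ((ε : ℤ) : ℝ) * k +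
        ((σ : ℤ) : ℝ) * s * (((σ : ℤ) : ℝ) * (((ε : ℤ) : ℝ) * α)) +
        ((τ : ℤ) : ℝ) * t * (((τ : ℤ) : ℝ) * (((ε : ℤ) : ℝ) * β)) := by
      linear_combination -(s * ε * α) * hsq σ - (t * ε * β) * hsq τ
    rw [hsplit]
    have := mul_pos hs hσ'
    have := mul_nonneg ht.le hτ
    linarith
  simp [hzero] at hpos

lemma laurentMonomial_pos_of_orthant {ι : Type*} [Fintype ι] {x : ι → ℝˣ} {s : ι → ℤˣ}
    (h : ∀ j, 0 < ((s j : ℤ) : ℝ) * (x j : ℝ)) (n : ι → ℤ) :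
    0 < (((laurentMonomial s n : ℤˣ) : ℤ) : ℝ) * ((laurentMonomial x n : ℝˣ) : ℝ) := by
  let φ : ℤˣ →* ℝˣ := Units.map (Int.castRingHom ℝ)
  have hmul : (((laurentMonomial s n : ℤˣ) : ℤ) : ℝ) * ((laurentMonomial x n : ℝˣ) : ℝ) =
      ((laurentMonomial (φ ∘ s * x) n : ℝˣ) : ℝ) := by
    rw [mul_laurentMonomial, ← map_laurentMonomial]
    rfl
  rw [hmul, laurentMonomial, Units.coe_prod]
  refine Finset.prod_pos fun j _ => ?_
  rw [Units.val_zpow_eq_zpow_val]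
  exact zpow_pos (h j) _

lemma ne_of_doubleArea_ne_zero {P Q R : Fin 2 → ℤ} (h : doubleArea P Q R ≠ 0) :
    P ≠ Q ∧ P ≠ R ∧ Q ≠ R := by
  refine ⟨?_, ?_, ?_⟩ <;> rintro rfl <;>
    exact h (by simp only [doubleArea, wedge, Pi.sub_apply]; ring)

variable {A : Finset (Fin 2 → ℤ)} {a : (Fin 2 → ℤ) → ℂ}

/-- Divide the polynomial by the monomial of the centre `C` and take the component orthogonal to the
coefficient at the vertex `R`. -/
lemma exists_realZeros_subset_line {P Q R C : Fin 2 → ℤ} (hmem : P ∈ A ∧ Q ∈ A ∧ R ∈ A)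
    (hall : ∀ X ∈ A, X = P ∨ X = Q ∨ X = R ∨ X = C) (hPQR : doubleArea P Q R ≠ 0)
    {θ : Torus (Fin 2)} {c : (Fin 2 → ℤ) → ℂ}
    (hc : ∀ X, c X = a X * ((laurentMonomial (expTorus θ) X : Circle) : ℂ)) :
    ∃ k : ℝ, ∀ x ∈ realZeros A a θ,
      k + ((laurentMonomial x (P - C) : ℝˣ) : ℝ) * (conj (c R) * c P).im +
        ((laurentMonomial x (Q - C) : ℝˣ) : ℝ) * (conj (c R) * c Q).im = 0 := by
  obtain ⟨hPQ, hPR, hQR⟩ := ne_of_doubleArea_ne_zero hPQR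
  have hsub : {P, Q, R} ⊆ A := by simp [Finset.insert_subset_iff, hmem]
  refine ⟨(conj (c R) * ∑ X ∈ A \ {P, Q, R}, c X).im, fun x hx => ?_⟩
  have hfactor : ∀ X, a X * ((laurentMonomial (polar x θ) X : ℂˣ) : ℂ) =
      ((laurentMonomial x C : ℝˣ) : ℝ) * (((laurentMonomial x (X - C) : ℝˣ) : ℝ) * c X) := by
    intro X
    have hX : laurentMonomial x X = laurentMonomial x C * laurentMonomial x (X - C) := by
      rw [← laurentMonomial_add, add_sub_cancel]
    rw [hc, coe_laurentMonomial_polar, hX, Units.val_mul, ofReal_mul]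
    ring
  have hcentre : ∀ X ∈ A \ {P, Q, R}, ((laurentMonomial x (X - C) : ℝˣ) : ℝ) * c X = c X := by
    intro X hX
    simp only [Finset.mem_sdiff, Finset.mem_insert, Finset.mem_singleton] at hX
    have hXC : X = C := by
      have := hall X hX.1
      tauto
    simp [hXC, laurentMonomial]
  have hzero : ∑ X ∈ A, ((laurentMonomial x (X - C) : ℝˣ) : ℝ) * c X = 0 := by
    rw [realZeros, Set.mem_ofPred_eq, laurentEval, Finset.sum_congr rfl fun X _ => hfactor X,
      ← Finset.mul_sum, mul_eq_zero, ofReal_eq_zero] at hx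
    exact hx.resolve_left (Units.ne_zero _)
  rw [← Finset.sum_sdiff hsub, Finset.sum_congr rfl hcentre,
    Finset.sum_insert (by simp [hPQ, hPR]), Finset.sum_pair hQR] at hzero
  have him := congrArg (fun w => (conj (c R) * w).im) hzero
  have hscale : ∀ (r : ℝ) (w : ℂ), (conj (c R) * (r * w)).im = r * (conj (c R) * w).im :=
    fun r w => by rw [mul_left_comm, im_ofReal_mul]
  have hR : (conj (c R) * c R).im = 0 := by rw [mul_comm, mul_conj, ofReal_im]
  simp only [mul_add, add_im, hscale, hR, mul_zero, zero_im] at him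
  linarith

lemma IsExceptionalTriangle.ae_orthants_ne_univ (h : IsExceptionalTriangle A)
    (ha : ∀ α ∈ A, a α ≠ 0) :
    ∀ᵐ θ : Torus (Fin 2), orthants (realZeros A a θ) ≠ Set.univ := by
  obtain ⟨P, Q, R, C, hmem, hC, hdet, hall⟩ := h
  have hPQR : doubleArea P Q R ≠ 0 := by
    rw [doubleArea_eq_three_mul_wedge hC, hdet]
    norm_num
  filter_upwards [ae_im_conj_mul_ne_zero (ne_of_doubleArea_ne_zero hPQR).2.1.symm
    (ha R hmem.2.2) (ha P hmem.1)] with θ hθ huniv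
  obtain ⟨k, hk⟩ := exists_realZeros_subset_line (a := a) (θ := θ) hmem hall hPQR fun _ => rfl
  obtain ⟨σ, τ, hmiss⟩ := exists_quadrant_add_mul_add_mul_ne_zero k hθ
    (conj (a R * ((laurentMonomial (expTorus θ) R : Circle) : ℂ)) *
      (a Q * ((laurentMonomial (expTorus θ) Q : Circle) : ℂ))).im
  obtain ⟨s, hs⟩ := (laurentMonomial_bijective_of_wedge_eq_one hdet).surjective (σ, τ)
  obtain ⟨x, hx, hxs⟩ : s ∈ orthants (realZeros A a θ) := huniv ▸ Set.mem_univ s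
  rw [Prod.mk.injEq] at hs
  refine hmiss _ _ ?_ ?_ (hk x hx)
  · exact hs.1 ▸ laurentMonomial_pos_of_orthant hxs (P - C)
  · exact hs.2 ▸ laurentMonomial_pos_of_orthant hxs (Q - C)

lemma IsExceptionalTriangle.hasQuadrilateral (h : IsExceptionalTriangle A) :
    HasQuadrilateral A 3 := by
  obtain ⟨P, Q, R, C, ⟨hP, hQ, hR⟩, hC, hdet, -⟩ := h
  refine ⟨P, hP, Q, hQ, R, hR, P, hP, ?_⟩
  rw [doubleArea_eq_three_mul_wedge hC, hdet]
  simp [doubleArea, wedge]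

end ExceptionalTriangle

lemma encard_univ_units_int_pi_two : (Set.univ : Set (Fin 2 → ℤˣ)).encard = 4 := by
  simp [Set.encard_univ]

theorem exists_hasQuadrilateral_and_ae_encard_orthants_le {A : Finset (Fin 2 → ℤ)}
    (hA : A.Nonempty) {a : (Fin 2 → ℤ) → ℂ} (ha : ∀ α ∈ A, a α ≠ 0) :
    ∃ K : ℕ, HasQuadrilateral A K ∧
      ∀ᵐ θ : Torus (Fin 2), (orthants (realZeros A a θ)).encard ≤ K := by
  rcases isThin_or_isExceptionalTriangle_or_hasQuadrilateral hA with hthin | htri | hquad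
  · rcases hthin.exists_laurentEval_eq hA ha with
      ⟨P, e, he, p, hp, heval⟩ | ⟨P, e, e', hdet, p, q, hp, hq, hquad, heval⟩
    · obtain ⟨X, hX⟩ := hA
      refine ⟨0, ⟨X, hX, X, hX, X, hX, X, hX, by simp⟩, ?_⟩
      filter_upwards [ae_realZeros_eq_empty he hp heval] with θ hθ
      simp [hθ, orthants]
    · refine ⟨p.natDegree + q.natDegree, by exact_mod_cast hquad, ?_⟩
      filter_upwards [ae_encard_realZeros_le hdet hp hq heval] with θ hθ
      exact_mod_cast (encard_orthants_le _).trans hθ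
  · refine ⟨3, htri.hasQuadrilateral, ?_⟩
    filter_upwards [htri.ae_orthants_ne_univ ha] with θ hθ
    refine Order.le_of_lt_add_one ?_
    have hlt := (Set.toFinite _).encard_lt_encard (Set.ssubset_univ_iff.2 hθ)
    rwa [encard_univ_units_int_pi_two] at hlt
  · refine ⟨4, hquad, .of_forall fun θ => ?_⟩
    exact (Set.encard_le_encard (Set.subset_univ _)).trans encard_univ_units_int_pi_two.le

end Coamoeba

/-- **Remark 5.17(2).** The Haar measure of the coamoeba of a complex algebraic plane
curve `V_f` in the torus `T² = (ℝ/2πℤ)²` is at most `2π² · Area(Δ_f)`, where `Δ_f`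
is the Newton polygon of `f`. -/
theorem coamoeba_area_le_of_plane_curve
    (A : Finset (Fin 2 → ℤ)) (hA : A.Nonempty)
    (a : (Fin 2 → ℤ) → ℂ) (ha : ∀ α ∈ A, a α ≠ 0)
    (Δ : Set (Fin 2 → ℝ))
    (hΔ : Δ = convexHull ℝ ((fun (α : Fin 2 → ℤ) (j : Fin 2) => (α j : ℝ)) '' A))
    (coAmoeba : Set (Fin 2 → AddCircle (2 * Real.pi)))
    (hcoAmoeba : coAmoeba = {θ : Fin 2 → AddCircle (2 * Real.pi) | ∃ z : Fin 2 → ℂ,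
      (∀ j, z j ≠ 0) ∧ (∑ α ∈ A, a α * ∏ j, z j ^ (α j)) = 0 ∧
      ∀ j, θ j = ((z j).arg : AddCircle (2 * Real.pi))}) :
    MeasureTheory.volume coAmoeba
      ≤ ENNReal.ofReal (2 * Real.pi ^ 2) * MeasureTheory.volume Δ := by
  subst hΔ hcoAmoeba
  obtain ⟨K, hquad, hcount⟩ := Coamoeba.exists_hasQuadrilateral_and_ae_encard_orthants_le hA ha
  have hvolume := Coamoeba.volume_coamoeba_le_of_encard_orthants_le hcount
  rw [Coamoeba.coamoeba_eq_setOf_ne_zero] at hvolume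
  refine hvolume.trans ?_
  calc (K : ℝ≥0∞) * ENNReal.ofReal Real.pi ^ Fintype.card (Fin 2)
      = ENNReal.ofReal (2 * Real.pi ^ 2) * ENNReal.ofReal ((K : ℤ) / 2) := by
        rw [Fintype.card_fin, ← ENNReal.ofReal_pow Real.pi_pos.le, ← ENNReal.ofReal_natCast,
          ← ENNReal.ofReal_mul (by positivity), ← ENNReal.ofReal_mul (by positivity),
          Int.cast_natCast]
        ring_nf
    _ ≤ ENNReal.ofReal (2 * Real.pi ^ 2) * MeasureTheory.volume (Coamoeba.newtonPolytope A) := by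
        gcongr
        exact hquad.le_volume_newtonPolytope
end

section
/- Let 𝕂 be the field of generalized Puiseux series over ℂ with real exponents (Hahn series Σ_{j∈S} ξ_j t^j with ξ_j ∈ ℂ and S ⊆ ℝ well-ordered), with valuation val(a) = −min(supp a) for a ≠ 0. Let g(z) = Σ_{α∈A} a_α z^α be a Laurent polynomial over 𝕂 with finite nonempty support A ⊆ ℤⁿ and nonzero coefficients a_α ∈ 𝕂*. Then the closure in ℝⁿ of the set { (val(z₁), …, val(z_n)) : z ∈ (𝕂*)ⁿ, g(z) = 0 } equals the tropical hypersurface Γ_g = { x ∈ ℝⁿ : the maximum in max_{α∈A} ( val(a_α) + ⟨α, x⟩ ) is attained for at least two distinct α ∈ A }. (Theorem 2.3, Kapranov.) -/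
open Complex

/-!
If `z` is a zero of `g`, the ultrametric inequality forces two terms `a_α z^α` to share the largest
valuation, so `val z` lies in the tropical hypersurface.

Conversely, let the maximum `M` at `x` be attained at `α` and `β`. Choose `m` with the numbers
`⟨γ, m⟩`, `γ ∈ A`, distinct and substitute `z_j = t^(-x_j) s^(m_j)`. Multiplied by `t^M`, the
equation becomes a Laurent equation in `s` with integral coefficients, at least two of them units,
so its reduction has a nonzero root. This root is close to a root `s` of valuation zero because the
Hahn series field `K` is algebraically closed. The image is therefore already closed.

`K` is algebraically closed since an element `a` algebraic over `K` has a best approximation `x ∈ K`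
(Hahn series are spherically complete), whereas `a - x ≠ 0` could be approximated further by a
monomial: the value group is divisible and the residue field is algebraically closed.
-/

/-! ### Valued fields -/

section ValuedField

open Polynomial

theorem exists_ne_map_eq_of_sum_eq_zero {R Γ₀ σ : Type*} [Ring R]
    [LinearOrderedCommMonoidWithZero Γ₀] (v : Valuation R Γ₀) {s : Finset σ} {f : σ → R}
    (hsum : ∑ i ∈ s, f i = 0) (hf : ∃ i ∈ s, v (f i) ≠ 0) :
    ∃ i ∈ s, ∃ j ∈ s, i ≠ j ∧ v (f i) = v (f j) ∧ v (f i) ≠ 0 ∧ ∀ l ∈ s, v (f l) ≤ v (f i) := by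
  classical
  obtain ⟨i₀, hi₀, hne⟩ := hf
  obtain ⟨i, hi, hmax⟩ := s.exists_max_image (v ∘ f) ⟨i₀, hi₀⟩
  have hpos : v (f i) ≠ 0 := ((zero_lt_iff.mpr hne).trans_le (hmax i₀ hi₀)).ne'
  by_contra! h
  refine hpos ?_
  rw [← v.map_sum_eq_of_lt hi, hsum, v.map_zero]
  intro j hj
  obtain ⟨hjs, hji⟩ := Finset.mem_sdiff.mp hj
  refine (hmax j hjs).lt_of_ne fun heq => ?_
  obtain ⟨l, hl, hlt⟩ := h i hi j hjs (fun e => hji (by simp [e])) heq.symm hpos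
  exact hlt.not_ge (hmax l hl)

theorem exists_valuationSubring_hasExtension {K Γ₀ : Type*} (L : Type*) [Field K] [Field L]
    [Algebra K L] [LinearOrderedCommGroupWithZero Γ₀] (v : Valuation K Γ₀) :
    ∃ B : ValuationSubring L, v.HasExtension B.valuation := by
  obtain ⟨B, hB⟩ := LocalSubring.exists_le_valuationSubring
    (v.valuationSubring.toLocalSubring.map (algebraMap K L))
  obtain ⟨hle, hloc⟩ := LocalSubring.le_def.mp hB
  have mem_of_le {x : K} (hx : v x ≤ 1) : algebraMap K L x ∈ B := hle ⟨x, hx, rfl⟩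
  refine ⟨B, .ofComapInteger <| SetLike.ext fun x => ?_⟩
  rw [Subring.mem_comap, Valuation.mem_integer_iff, Valuation.mem_integer_iff,
    B.valuation_le_one_iff]
  refine ⟨fun hx => ?_, mem_of_le⟩
  by_contra! h
  have hx0 : x ≠ 0 := by rintro rfl; simp at h
  have hinv : v x⁻¹ ≤ 1 := by rw [map_inv₀]; exact inv_le_one_of_one_le₀ h.le
  let y : (v.valuationSubring.toLocalSubring.map (algebraMap K L)).toSubring :=
    ⟨algebraMap K L x⁻¹, x⁻¹, hinv, rfl⟩
  have hy : IsUnit (Subring.inclusion hle y) :=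
    IsUnit.of_mul_eq_one ⟨algebraMap K L x, hx⟩ <| Subtype.ext <| by
      simp [y, hx0]
  obtain ⟨⟨_, z, hz, rfl⟩, hyz⟩ :=
    (isUnit_of_map_unit (Subring.inclusion hle) y hy).exists_right_inv
  have hxz : z = x := by
    have hmul : algebraMap K L (x⁻¹ * z) = algebraMap K L 1 := by
      rw [map_mul, map_one]
      exact congrArg Subtype.val hyz
    exact ((inv_mul_eq_one₀ hx0).mp ((algebraMap K L).injective hmul)).symm
  exact h.not_ge (hxz ▸ hz)

theorem exists_ne_zero_map_pow_eq_of_isAlgebraic {K L Γ₀ : Type*} [Field K] [Field L]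
    [Algebra K L] [LinearOrderedCommGroupWithZero Γ₀] (v : Valuation L Γ₀) {a : L} (ha : a ≠ 0)
    (halg : IsAlgebraic K a) :
    ∃ n ≠ 0, ∃ b : K, b ≠ 0 ∧ v a ^ n = v (algebraMap K L b) := by
  obtain ⟨p, hp, hpa⟩ := halg
  rw [aeval_eq_sum_range] at hpa
  have hlead : v (p.coeff p.natDegree • a ^ p.natDegree) ≠ 0 := by
    simp [Algebra.smul_def, hp, ha]
  obtain ⟨i, -, j, -, hij, heq, hne, -⟩ := exists_ne_map_eq_of_sum_eq_zero v hpa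
    ⟨p.natDegree, Finset.self_mem_range_succ _, hlead⟩
  wlog hlt : i < j generalizing i j
  · exact this j i hij.symm heq.symm (heq ▸ hne) (hij.lt_or_gt.resolve_left hlt)
  have hi : p.coeff i ≠ 0 := fun h => hne (by simp [h])
  have hj : p.coeff j ≠ 0 := fun h => hne (by simp [heq, h])
  have hva : v a ≠ 0 := v.ne_zero_iff.mpr ha
  have hvj : v (algebraMap K L (p.coeff j)) ≠ 0 := by simpa using hj
  refine ⟨j - i, (Nat.sub_pos_of_lt hlt).ne', p.coeff i / p.coeff j, div_ne_zero hi hj, ?_⟩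
  simp only [Algebra.smul_def, map_mul, map_pow] at heq
  rw [map_div₀, map_div₀, pow_sub₀ _ hva hlt.le, eq_div_iff hvj, mul_right_comm, mul_comm (v a ^ j),
    ← heq, mul_inv_cancel_right₀ (pow_ne_zero i hva)]

theorem map_eval_lt_one {R Γ₀ : Type*} [CommRing R] [LinearOrderedCommGroupWithZero Γ₀]
    {v : Valuation R Γ₀} {f : R[X]} {u : R} (hu : v u ≤ 1)
    (hf : ∀ i, v (f.coeff i) < 1) : v (f.eval u) < 1 := by
  rw [eval_eq_sum_range]
  refine v.map_sum_lt one_ne_zero fun i _ => ?_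
  rw [map_mul, map_pow]
  exact mul_lt_one_of_lt_of_le (hf i) (pow_le_one' hu i)

theorem map_coeff_le_map_eval_of_forall_one_le {R Γ₀ : Type*} [CommRing R]
    [LinearOrderedCommMonoidWithZero Γ₀] {v : Valuation R Γ₀} {c : R} (hc : v c ≤ 1)
    {s : Multiset R} (hs : ∀ r ∈ s, 1 ≤ v (c - r)) (m : ℕ) :
    v ((s.map fun r => X - C r).prod.coeff m) ≤ v ((s.map fun r => X - C r).prod.eval c) := by
  induction s using Multiset.induction_on generalizing m with
  | empty =>
    simp only [Multiset.map_zero, Multiset.prod_zero, coeff_one, eval_one, map_one]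
    split_ifs <;> simp
  | cons r s ih =>
    have hr : 1 ≤ v (c - r) := hs r (Multiset.mem_cons_self r s)
    have hvr : v r ≤ v (c - r) := by
      simpa using v.map_sub_le (hc.trans hr) (le_refl (v (c - r)))
    specialize ih fun r hr => hs r (Multiset.mem_cons_of_mem hr)
    rw [Multiset.map_cons, Multiset.prod_cons, eval_mul, eval_sub, eval_X, eval_C, map_mul, sub_mul,
      coeff_sub, coeff_C_mul]
    refine v.map_sub_le ?_ ?_
    · cases m with
      | zero => simp
      | succ m =>
        rw [coeff_X_mul]
        exact (ih m).trans (le_mul_of_one_le_left' hr)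
    · rw [map_mul]
      exact mul_le_mul' hvr (ih m)

theorem exists_mem_roots_map_sub_lt_one {L Γ₀ : Type*} [Field L]
    [LinearOrderedCommMonoidWithZero Γ₀] {v : Valuation L Γ₀} {f : L[X]} (hf : f.Splits) {c : L}
    (hc : v c ≤ 1) {m : ℕ} (hm : v (f.eval c) < v (f.coeff m)) :
    ∃ r ∈ f.roots, v (c - r) < 1 := by
  by_contra! h
  refine hm.not_ge ?_
  rw [hf.eq_prod_roots, coeff_C_mul, eval_mul, eval_C, map_mul, map_mul]
  exact mul_le_mul_right (map_coeff_le_map_eval_of_forall_one_le hc h m) _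

end ValuedField

/-! ### Algebraic closedness of Hahn series fields -/

section HahnSeries

open Polynomial
open scoped HahnSeries

theorem exists_forall_le_orderTop_sub {Γ R σ : Type*} [LinearOrder Γ] [AddCommGroup R]
    (b : σ → R⟦Γ⟧) (g : σ → Γ) (h : ∀ i j, min (g i) (g j) ≤ (b i - b j).orderTop) :
    ∃ x : R⟦Γ⟧, ∀ i, g i ≤ (x - b i).orderTop := by
  classical
  let c (γ : Γ) : R := if hγ : ∃ i, γ < g i then (b hγ.choose).coeff γ else 0
  have c_eq {γ : Γ} {i : σ} (hi : γ < g i) : c γ = (b i).coeff γ := by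
    have hγ : ∃ i, γ < g i := ⟨i, hi⟩
    have : (γ : WithTop Γ) < (b hγ.choose - b i).orderTop := by
      refine lt_of_lt_of_le ?_ (h hγ.choose i)
      exact lt_min (WithTop.coe_lt_coe.mpr hγ.choose_spec) (WithTop.coe_lt_coe.mpr hi)
    simpa [c, dif_pos hγ, sub_eq_zero] using HahnSeries.coeff_eq_zero_of_lt_orderTop this
  have hpwo : c.support.IsPWO := by
    rw [Set.isPWO_iff_isWF, Set.isWF_iff_no_descending_seq]
    rintro u hu hmem
    obtain ⟨i, hi⟩ : ∃ i, u 0 < g i := by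
      by_contra hne
      exact hmem 0 (dif_neg hne)
    refine Set.isWF_iff_no_descending_seq.mp (b i).isWF_support u hu fun n => ?_
    rw [HahnSeries.mem_support, ← c_eq ((hu.antitone (Nat.zero_le n)).trans_lt hi)]
    exact hmem n
  refine ⟨⟨c, hpwo⟩, fun i => HahnSeries.le_orderTop_iff_forall.mpr fun γ hγ => ?_⟩
  rw [HahnSeries.coeff_sub, sub_eq_zero]
  exact c_eq (WithTop.coe_lt_coe.mp hγ)

/-- The valuation by order of vanishing, in Mathlib's multiplicative convention: the order of the
value group is reversed, so that `x` is small when `x.orderTop` is large. -/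
noncomputable abbrev hahnValuation (Γ k : Type*) [AddCommGroup Γ] [LinearOrder Γ]
    [IsOrderedAddMonoid Γ] [Field k] : Valuation k⟦Γ⟧ (Multiplicative (WithTop Γ)ᵒᵈ) :=
  (HahnSeries.addVal Γ k).toValuation

theorem hahnValuation_le_iff {Γ k : Type*} [AddCommGroup Γ] [LinearOrder Γ] [IsOrderedAddMonoid Γ]
    [Field k] {x y : k⟦Γ⟧} :
    hahnValuation Γ k x ≤ hahnValuation Γ k y ↔ y.orderTop ≤ x.orderTop :=
  Iff.rfl

/-- The reduction of a polynomial over the Hahn series modulo the series of positive order,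
obtained by taking constant coefficients. It is meaningful for polynomials whose coefficients have
nonnegative order. -/
noncomputable def residuePolynomial {Γ R : Type*} [AddCommMonoid Γ] [PartialOrder Γ]
    [IsOrderedCancelAddMonoid Γ] [Semiring R] (p : R⟦Γ⟧[X]) : R[X] :=
  ∑ i ∈ p.support, monomial i ((p.coeff i).coeff 0)

theorem coeff_residuePolynomial {Γ R : Type*} [AddCommMonoid Γ] [PartialOrder Γ]
    [IsOrderedCancelAddMonoid Γ] [Semiring R] (p : R⟦Γ⟧[X]) (i : ℕ) :
    (residuePolynomial p).coeff i = (p.coeff i).coeff 0 := by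
  simp only [residuePolynomial, finsetSum_coeff, coeff_monomial, Finset.sum_ite_eq',
    mem_support_iff]
  split_ifs with h
  · rfl
  · simp [notMem_support_iff.mp h]

theorem zero_lt_orderTop_sub_C_coeff_zero {Γ R : Type*} [AddCommMonoid Γ] [LinearOrder Γ]
    [IsOrderedCancelAddMonoid Γ] [Ring R] {x : R⟦Γ⟧} (hx : 0 ≤ x.orderTop) :
    0 < (x - HahnSeries.C (x.coeff 0)).orderTop := by
  refine lt_of_le_of_ne (HahnSeries.le_orderTop_iff_forall.mpr fun γ hγ => ?_) fun h => ?_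
  · have hγ0 : γ < 0 := WithTop.coe_lt_coe.mp hγ
    simp [HahnSeries.coeff_eq_zero_of_lt_orderTop (hγ.trans_le hx), HahnSeries.C_apply,
      HahnSeries.coeff_single_of_ne hγ0.ne]
  · refine HahnSeries.coeff_orderTop_ne h.symm ?_
    simp [HahnSeries.C_apply]

variable {Γ k : Type*} [AddCommGroup Γ] [LinearOrder Γ] [IsOrderedAddMonoid Γ] [Field k]
  {L Γ₀ : Type*} [Field L] [LinearOrderedCommGroupWithZero Γ₀] [Algebra k⟦Γ⟧ L]
  (v : Valuation L Γ₀) [(hahnValuation Γ k).HasExtension v]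

theorem map_eval_map_residuePolynomial_lt_one_iff {p : k⟦Γ⟧[X]} (hp : ∀ i, 0 ≤ (p.coeff i).orderTop)
    {u : L} (hu : v u ≤ 1) :
    v (((residuePolynomial p).map ((algebraMap k⟦Γ⟧ L).comp HahnSeries.C)).eval u) < 1 ↔
      v (aeval u p) < 1 := by
  set q := (residuePolynomial p).map ((algebraMap k⟦Γ⟧ L).comp HahnSeries.C) with hq
  have hclose : v (aeval u p - q.eval u) < 1 := by
    rw [← eval_map_algebraMap, ← eval_sub]
    refine map_eval_lt_one hu fun i => ?_
    rw [hq, coeff_sub, coeff_map, coeff_map, coeff_residuePolynomial, RingHom.comp_apply, ← map_sub,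
      Valuation.HasExtension.val_map_lt_one_iff (hahnValuation Γ k)]
    exact zero_lt_orderTop_sub_C_coeff_zero (hp i)
  exact ⟨fun h => by simpa using v.map_add_lt hclose h,
    fun h => by simpa using v.map_sub_lt h hclose⟩

theorem exists_map_sub_C_lt_one_of_aeval_eq_zero [IsAlgClosed k] {p : k⟦Γ⟧[X]}
    (hp : ∀ i, 0 ≤ (p.coeff i).orderTop) (hp0 : residuePolynomial p ≠ 0) {u : L} (hu : v u ≤ 1)
    (hpu : aeval u p = 0) :
    ∃ c : k, v (u - algebraMap k⟦Γ⟧ L (HahnSeries.C c)) < 1 := by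
  let φ : k →+* L := (algebraMap k⟦Γ⟧ L).comp HahnSeries.C
  have hsplits : (residuePolynomial p).Splits := IsAlgClosed.splits _
  have hlead : v (((residuePolynomial p).map φ).coeff (residuePolynomial p).natDegree) = 1 := by
    rw [coeff_map, RingHom.comp_apply,
      Valuation.HasExtension.val_map_eq_one_iff (hahnValuation Γ k)]
    exact HahnSeries.orderTop_single (leadingCoeff_ne_zero.mpr hp0)
  have heval : v (((residuePolynomial p).map φ).eval u) < 1 :=
    (map_eval_map_residuePolynomial_lt_one_iff v hp hu).mpr (by simp [hpu])
  obtain ⟨r, hr, hur⟩ :=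
    exists_mem_roots_map_sub_lt_one (hsplits.map φ) hu (heval.trans_eq hlead.symm)
  rw [hsplits.roots_map φ, Multiset.mem_map] at hr
  obtain ⟨c, -, rfl⟩ := hr
  exact ⟨c, hur⟩

theorem hahnValuation_single_order {x : k⟦Γ⟧} (hx : x ≠ 0) :
    hahnValuation Γ k (HahnSeries.single x.order 1) = hahnValuation Γ k x :=
  (HahnSeries.orderTop_single one_ne_zero).trans (HahnSeries.order_eq_orderTop_of_ne_zero hx)

theorem exists_map_single_eq_of_isAlgebraic [DivisibleBy Γ ℤ] {a : L} (ha : a ≠ 0)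
    (halg : IsAlgebraic k⟦Γ⟧ a) :
    ∃ γ : Γ, v (algebraMap k⟦Γ⟧ L (HahnSeries.single γ 1)) = v a := by
  obtain ⟨n, hn, b, hb, hab⟩ := exists_ne_zero_map_pow_eq_of_isAlgebraic v ha halg
  refine ⟨DivisibleBy.div b.order (n : ℤ), (pow_left_inj₀ zero_le zero_le hn).mp ?_⟩
  rw [hab, ← map_pow, ← map_pow, HahnSeries.single_pow, one_pow, ← natCast_zsmul,
    DivisibleBy.div_cancel _ (Int.natCast_ne_zero.mpr hn),
    Valuation.HasExtension.val_map_eq_iff (hahnValuation Γ k)]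
  exact hahnValuation_single_order hb

theorem exists_normalized_aeval_eq_zero {a : L} (halg : IsAlgebraic k⟦Γ⟧ a) :
    ∃ p : k⟦Γ⟧[X], aeval a p = 0 ∧ (∀ i, 0 ≤ (p.coeff i).orderTop) ∧ residuePolynomial p ≠ 0 := by
  obtain ⟨p, hp, hpa⟩ := halg
  obtain ⟨m, hm, hmin⟩ := p.support.exists_min_image (fun i => (p.coeff i).orderTop)
    (support_nonempty.mpr hp)
  have hpm : p.coeff m ≠ 0 := mem_support_iff.mp hm
  let s : k⟦Γ⟧ := HahnSeries.single (-(p.coeff m).order) 1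
  have orderTop_s_mul (x : k⟦Γ⟧) : (s * x).orderTop = (-(p.coeff m).order : Γ) + x.orderTop := by
    rw [HahnSeries.orderTop_mul, HahnSeries.orderTop_single one_ne_zero]
  have hsm : (s * p.coeff m).orderTop = 0 := by
    rw [orderTop_s_mul, ← HahnSeries.order_eq_orderTop_of_ne_zero hpm, ← WithTop.coe_add,
      neg_add_cancel, WithTop.coe_zero]
  refine ⟨C s * p, by simp [hpa], fun i => ?_, fun h => ?_⟩
  · rw [coeff_C_mul, ← hsm, orderTop_s_mul, orderTop_s_mul]
    by_cases hi : p.coeff i = 0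
    · simp [hi]
    · gcongr
      exact hmin i (mem_support_iff.mpr hi)
  · refine HahnSeries.coeff_orderTop_ne (x := s * p.coeff m) (g := 0) hsm ?_
    rw [← coeff_C_mul, ← coeff_residuePolynomial, h, coeff_zero]

theorem exists_map_sub_lt_of_isAlgebraic [DivisibleBy Γ ℤ] [IsAlgClosed k] {a : L} (ha : a ≠ 0)
    (halg : IsAlgebraic k⟦Γ⟧ a) : ∃ b : k⟦Γ⟧, v (a - algebraMap k⟦Γ⟧ L b) < v a := by
  obtain ⟨γ, hγ⟩ := exists_map_single_eq_of_isAlgebraic v ha halg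
  let t := algebraMap k⟦Γ⟧ L (HahnSeries.single γ 1)
  have hva : 0 < v a := zero_lt_iff.mpr (v.ne_zero_iff.mpr ha)
  have ht : t ≠ 0 := v.ne_zero_iff.mp (hγ ▸ hva.ne')
  have hu : v (a / t) = 1 := by rw [map_div₀, hγ, div_self hva.ne']
  obtain ⟨p, hpu, hp, hp0⟩ := exists_normalized_aeval_eq_zero (a := a / t)
    (by simpa only [div_eq_mul_inv] using halg.mul (isAlgebraic_algebraMap _).inv)
  obtain ⟨c, hc⟩ := exists_map_sub_C_lt_one_of_aeval_eq_zero v hp hp0 hu.le hpu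
  refine ⟨HahnSeries.C c * HahnSeries.single γ 1, ?_⟩
  rw [map_mul]
  calc v (a - algebraMap k⟦Γ⟧ L (HahnSeries.C c) * t)
      = v ((a / t - algebraMap k⟦Γ⟧ L (HahnSeries.C c)) * t) := by
        rw [sub_mul, div_mul_cancel₀ a ht]
    _ = v (a / t - algebraMap k⟦Γ⟧ L (HahnSeries.C c)) * v a := by rw [map_mul, hγ]
    _ < v a := mul_lt_of_lt_one_left hva hc

theorem exists_forall_map_sub_algebraMap_le [DivisibleBy Γ ℤ] {a : L}
    (halg : IsAlgebraic k⟦Γ⟧ a) :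
    ∃ x : k⟦Γ⟧, ∀ y : k⟦Γ⟧, v (a - algebraMap k⟦Γ⟧ L x) ≤ v (a - algebraMap k⟦Γ⟧ L y) := by
  by_cases ha : a ∈ Set.range (algebraMap k⟦Γ⟧ L)
  · obtain ⟨x, rfl⟩ := ha
    exact ⟨x, fun y => by simp⟩
  have sub_ne (y : k⟦Γ⟧) : a - algebraMap _ L y ≠ 0 := fun h => ha ⟨y, (sub_eq_zero.mp h).symm⟩
  choose g hg using fun y => exists_map_single_eq_of_isAlgebraic v (sub_ne y)
    (halg.sub (isAlgebraic_algebraMap y))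
  have le_orderTop_iff {y z : k⟦Γ⟧} :
      g y ≤ z.orderTop ↔ v (algebraMap _ L z) ≤ v (a - algebraMap _ L y) := by
    rw [← hg, Valuation.HasExtension.val_map_le_iff (hahnValuation Γ k),
      hahnValuation_le_iff, HahnSeries.orderTop_single one_ne_zero]
  have min_le_orderTop (y z : k⟦Γ⟧) : min (g y) (g z) ≤ (y - z).orderTop := by
    have hsub : algebraMap _ L (y - z) = (a - algebraMap _ L z) - (a - algebraMap _ L y) := by
      rw [map_sub, sub_sub_sub_cancel_left]
    rcases le_total (v (a - algebraMap _ L y)) (v (a - algebraMap _ L z)) with h | h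
    · exact (WithTop.coe_le_coe.mpr (min_le_right _ _)).trans
        (le_orderTop_iff.mpr (hsub ▸ v.map_sub_le le_rfl h))
    · exact (WithTop.coe_le_coe.mpr (min_le_left _ _)).trans
        (le_orderTop_iff.mpr (hsub ▸ v.map_sub_le h le_rfl))
  obtain ⟨x, hx⟩ := exists_forall_le_orderTop_sub id g min_le_orderTop
  refine ⟨x, fun y => ?_⟩
  rw [← sub_sub_sub_cancel_right _ _ (algebraMap _ L y), ← map_sub]
  exact v.map_sub_le le_rfl (le_orderTop_iff.mp (hx y))

theorem isAlgClosed_hahnSeries (Γ k : Type*) [AddCommGroup Γ] [LinearOrder Γ]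
    [IsOrderedAddMonoid Γ] [DivisibleBy Γ ℤ] [Field k] [IsAlgClosed k] : IsAlgClosed k⟦Γ⟧ := by
  obtain ⟨B, _⟩ := exists_valuationSubring_hasExtension (AlgebraicClosure k⟦Γ⟧) (hahnValuation Γ k)
  have hsurj : Function.Surjective (algebraMap k⟦Γ⟧ (AlgebraicClosure k⟦Γ⟧)) := fun a => by
    obtain ⟨x, hx⟩ := exists_forall_map_sub_algebraMap_le B.valuation
      (Algebra.IsAlgebraic.isAlgebraic (R := k⟦Γ⟧) a)
    by_contra! h
    obtain ⟨b, hb⟩ := exists_map_sub_lt_of_isAlgebraic B.valuation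
      (sub_ne_zero.mpr (h x).symm) (Algebra.IsAlgebraic.isAlgebraic (R := k⟦Γ⟧) _)
    rw [sub_sub, ← map_add] at hb
    exact hb.not_ge (hx (x + b))
  exact IsAlgClosed.of_ringEquiv _ _
    (RingEquiv.ofBijective _ ⟨(algebraMap k⟦Γ⟧ _).injective, hsurj⟩).symm

end HahnSeries

/-! ### Laurent polynomials in one variable -/

section Laurent

open Polynomial
open scoped HahnSeries

theorem exists_ne_zero_isRoot_of_coeff_ne_zero {k : Type*} [Field k] [IsAlgClosed k] {q : k[X]}
    {i j : ℕ} (hij : i ≠ j) (hi : q.coeff i ≠ 0) (hj : q.coeff j ≠ 0) : ∃ c ≠ 0, q.IsRoot c := by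
  by_contra! h
  have hroots : q.roots = Multiset.replicate q.roots.card 0 :=
    Multiset.eq_replicate.mpr ⟨rfl, fun c hc =>
      by_contra fun hc0 => h c hc0 (isRoot_of_mem_roots hc)⟩
  have hmonomial : q = C q.leadingCoeff * X ^ q.roots.card := by
    conv_lhs => rw [(IsAlgClosed.splits q).eq_prod_roots, hroots]
    simp
  rw [hmonomial, coeff_C_mul_X_pow] at hi hj
  exact hij ((ite_ne_right_iff.mp hi).1.trans (ite_ne_right_iff.mp hj).1.symm)

variable {Γ k : Type*} [AddCommGroup Γ] [LinearOrder Γ] [IsOrderedAddMonoid Γ] [Field k]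

theorem exists_orderTop_eq_zero_isRoot [DivisibleBy Γ ℤ] [IsAlgClosed k] {f : k⟦Γ⟧[X]}
    (hf : ∀ i, 0 ≤ (f.coeff i).orderTop) {i j : ℕ} (hij : i ≠ j)
    (hi : (f.coeff i).orderTop = 0) (hj : (f.coeff j).orderTop = 0) :
    ∃ s : k⟦Γ⟧, s.orderTop = 0 ∧ f.IsRoot s := by
  have := isAlgClosed_hahnSeries Γ k
  let v := hahnValuation Γ k
  have coeff_ne {l : ℕ} (hl : (f.coeff l).orderTop = 0) : (residuePolynomial f).coeff l ≠ 0 := by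
    rw [coeff_residuePolynomial]
    exact HahnSeries.coeff_orderTop_ne hl
  obtain ⟨c, hc0, hc⟩ := exists_ne_zero_isRoot_of_coeff_ne_zero hij (coeff_ne hi) (coeff_ne hj)
  have hvc : v (HahnSeries.C c) = 1 := HahnSeries.orderTop_single hc0
  have hfc : v (f.eval (HahnSeries.C c)) < 1 := by
    rw [← coe_aeval_eq_eval, ← map_eval_map_residuePolynomial_lt_one_iff v hf hvc.le,
      Algebra.algebraMap_self, RingHom.id_comp, eval_map_apply, hc, map_zero, map_zero]
    exact zero_lt_one
  obtain ⟨s, hs, hcs⟩ := exists_mem_roots_map_sub_lt_one (IsAlgClosed.splits f) hvc.le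
    (hfc.trans_eq (show (1 : _) = v (f.coeff i) from hi.symm))
  refine ⟨s, ?_, isRoot_of_mem_roots hs⟩
  change v s = 1
  rw [← hvc, ← sub_sub_cancel (HahnSeries.C c) s]
  exact v.map_sub_eq_of_lt_left (hcs.trans_eq hvc.symm)

theorem exists_orderTop_eq_zero_sum_mul_zpow_eq_zero [DivisibleBy Γ ℤ] [IsAlgClosed k]
    {σ : Type*} {A : Finset σ} {e : σ → ℤ} (he : Set.InjOn e A) {b : σ → k⟦Γ⟧}
    (hb : ∀ α ∈ A, 0 ≤ (b α).orderTop) {α β : σ} (hα : α ∈ A) (hβ : β ∈ A) (hαβ : α ≠ β)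
    (hbα : (b α).orderTop = 0) (hbβ : (b β).orderTop = 0) :
    ∃ s : k⟦Γ⟧, s.orderTop = 0 ∧ ∑ γ ∈ A, b γ * s ^ e γ = 0 := by
  obtain ⟨N, hN⟩ := (A.image e).bddBelow
  have exponent (γ : σ) (hγ : γ ∈ A) : ((e γ - N).toNat : ℤ) = e γ - N :=
    Int.toNat_of_nonneg (sub_nonneg.mpr (hN (Finset.mem_coe.mpr (Finset.mem_image_of_mem e hγ))))
  have exponent_inj {γ δ : σ} (hγ : γ ∈ A) (hδ : δ ∈ A)
      (h : (e γ - N).toNat = (e δ - N).toNat) : γ = δ := by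
    refine he hγ hδ (sub_left_injective (b := N) ?_)
    exact (exponent γ hγ).symm.trans ((congrArg _ h).trans (exponent δ hδ))
  let f : k⟦Γ⟧[X] := ∑ γ ∈ A, monomial (e γ - N).toNat (b γ)
  have coeff_f {γ : σ} (hγ : γ ∈ A) : f.coeff (e γ - N).toNat = b γ := by
    rw [finsetSum_coeff, Finset.sum_eq_single_of_mem γ hγ, coeff_monomial_same]
    exact fun δ hδ hne => coeff_monomial_of_ne _ fun h => hne (exponent_inj hδ hγ h.symm)
  have coeff_f_nonneg (i : ℕ) : 0 ≤ (f.coeff i).orderTop := by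
    rw [finsetSum_coeff]
    refine (hahnValuation Γ k).map_sum_le (g := 1) fun γ hγ => ?_
    rw [coeff_monomial]
    split_ifs
    · exact hb γ hγ
    · exact (map_zero _).trans_le zero_le_one
  obtain ⟨s, hs, hfs⟩ := exists_orderTop_eq_zero_isRoot coeff_f_nonneg
    (fun h => hαβ (exponent_inj hα hβ h)) ((coeff_f hα).symm ▸ hbα) ((coeff_f hβ).symm ▸ hbβ)
  have hs0 : s ≠ 0 := by rintro rfl; simp at hs
  refine ⟨s, hs, ?_⟩
  calc ∑ γ ∈ A, b γ * s ^ e γ = (∑ γ ∈ A, b γ * s ^ (e γ - N).toNat) * s ^ N := by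
        rw [Finset.sum_mul]
        refine Finset.sum_congr rfl fun γ hγ => ?_
        rw [mul_assoc, ← zpow_natCast, exponent γ hγ, ← zpow_add₀ hs0, sub_add_cancel]
    _ = f.eval s * s ^ N := by simp only [f, eval_finsetSum, eval_monomial]
    _ = 0 := by rw [hfs, zero_mul]

end Laurent

/-! ### Tropical hypersurfaces -/

section TropicalHypersurface

open scoped HahnSeries

theorem exists_injOn_sum_mul {ι : Type*} [Fintype ι] (A : Finset (ι → ℤ)) :
    ∃ m : ι → ℤ, Set.InjOn (fun α : ι → ℤ => ∑ j, α j * m j) A := by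
  classical
  let form (α : ι → ℤ) : MvPolynomial ι ℤ := ∑ j, MvPolynomial.C (α j) * MvPolynomial.X j
  have eval_form (α m : ι → ℤ) : MvPolynomial.eval m (form α) = ∑ j, α j * m j := by simp [form]
  have form_ne_zero {α : ι → ℤ} (hα : α ≠ 0) : form α ≠ 0 := fun h => hα <| funext fun j => by
    simpa [Pi.single_apply] using (eval_form α (Pi.single j 1)).symm.trans (by simp [h])
  have hprod : ∏ p ∈ A.offDiag, form (p.1 - p.2) ≠ 0 := Finset.prod_ne_zero_iff.mpr fun p hp =>
    form_ne_zero (sub_ne_zero.mpr (Finset.mem_offDiag.mp hp).2.2)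
  obtain ⟨m, hm⟩ : ∃ m, MvPolynomial.eval m (∏ p ∈ A.offDiag, form (p.1 - p.2)) ≠ 0 := by
    by_contra! h
    exact hprod (MvPolynomial.funext fun m => by simp [h m])
  refine ⟨m, fun α hα β hβ hαβ => by_contra fun hne => ?_⟩
  rw [map_prod, Finset.prod_ne_zero_iff] at hm
  refine hm (α, β) (Finset.mem_offDiag.mpr ⟨hα, hβ, hne⟩) ?_
  rw [eval_form]
  simpa only [Pi.sub_apply, sub_mul, Finset.sum_sub_distrib, sub_eq_zero] using hαβ

variable {ι Γ k : Type*} [Fintype ι] [AddCommGroup Γ] [LinearOrder Γ] [IsOrderedAddMonoid Γ]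
  [Field k]

/-- The image of the hypersurface `∑ α ∈ A, a α * z ^ α = 0` of the torus under the coordinatewise
valuation `val = -order` (its non-archimedean amoeba). -/
def valuationImage (A : Finset (ι → ℤ)) (a : (ι → ℤ) → k⟦Γ⟧) : Set (ι → Γ) :=
  {x | ∃ z : ι → k⟦Γ⟧, (∀ j, z j ≠ 0) ∧ (∑ α ∈ A, a α * ∏ j, z j ^ (α j)) = 0 ∧
    ∀ j, x j = -(z j).order}

/-- The affine function `x ↦ val (a α) + ⟨α, x⟩` tropicalizing the monomial `a α * z ^ α`, where
`val = -order`. -/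
noncomputable def tropicalTerm (a : (ι → ℤ) → k⟦Γ⟧) (α : ι → ℤ) (x : ι → Γ) : Γ :=
  -(a α).order + ∑ j, α j • x j

/-- The corner locus of the tropical polynomial `x ↦ max_{α ∈ A} (val (a α) + ⟨α, x⟩)`: the points
where two distinct terms attain the maximum. -/
def tropicalHypersurface (A : Finset (ι → ℤ)) (hA : A.Nonempty) (a : (ι → ℤ) → k⟦Γ⟧) :
    Set (ι → Γ) :=
  {x | ∃ α ∈ A, ∃ β ∈ A, α ≠ β ∧
    (tropicalTerm a α x = A.sup' hA fun γ => tropicalTerm a γ x) ∧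
    (tropicalTerm a β x = A.sup' hA fun γ => tropicalTerm a γ x)}

theorem order_prod_zpow {z : ι → k⟦Γ⟧} (hz : ∀ j, z j ≠ 0) (α : ι → ℤ) :
    (∏ j, z j ^ α j).order = ∑ j, α j • (z j).order := by
  let orderHom : (k⟦Γ⟧)ˣ →* Multiplicative Γ :=
    { toFun u := .ofAdd (u : k⟦Γ⟧).order
      map_one' := by simp
      map_mul' u w := by simp [HahnSeries.order_mul u.ne_zero w.ne_zero] }
  lift z to ι → (k⟦Γ⟧)ˣ using fun j => (hz j).isUnit
  calc (∏ j, (z j : k⟦Γ⟧) ^ α j).order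
      = (orderHom (∏ j, z j ^ α j)).toAdd := by
        simp only [orderHom, MonoidHom.coe_mk, OneHom.coe_mk, toAdd_ofAdd, Units.coe_prod,
          Units.val_zpow_eq_zpow_val]
    _ = ∑ j, α j • (orderHom (z j)).toAdd := by
      rw [map_prod, toAdd_prod]
      simp only [map_zpow, toAdd_zpow]

theorem neg_order_mul_prod_zpow {a : (ι → ℤ) → k⟦Γ⟧} {α : ι → ℤ} (hα : a α ≠ 0) {z : ι → k⟦Γ⟧}
    (hz : ∀ j, z j ≠ 0) :
    -(a α * ∏ j, z j ^ α j).order = tropicalTerm a α fun j => -(z j).order := by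
  have hprod : ∏ j, z j ^ α j ≠ 0 := Finset.prod_ne_zero_iff.mpr fun j _ => zpow_ne_zero _ (hz j)
  rw [HahnSeries.order_mul hα hprod, order_prod_zpow hz]
  simp [tropicalTerm, add_comm]

theorem valuationImage_subset_tropicalHypersurface {A : Finset (ι → ℤ)} (hA : A.Nonempty)
    {a : (ι → ℤ) → k⟦Γ⟧} (ha : ∀ α ∈ A, a α ≠ 0) :
    valuationImage A a ⊆ tropicalHypersurface A hA a := by
  rintro x ⟨z, hz, hsum, hx⟩
  obtain rfl : x = fun j => -(z j).order := funext hx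
  let f (α : ι → ℤ) : k⟦Γ⟧ := a α * ∏ j, z j ^ α j
  have term_ne {α : ι → ℤ} (hα : α ∈ A) : f α ≠ 0 :=
    mul_ne_zero (ha α hα) (Finset.prod_ne_zero_iff.mpr fun j _ => zpow_ne_zero _ (hz j))
  have le_iff {α β : ι → ℤ} (hα : α ∈ A) (hβ : β ∈ A) :
      hahnValuation Γ k (f α) ≤ hahnValuation Γ k (f β) ↔
        tropicalTerm a α (fun j => -(z j).order) ≤ tropicalTerm a β (fun j => -(z j).order) := by
    rw [hahnValuation_le_iff, ← HahnSeries.order_eq_orderTop_of_ne_zero (term_ne hα),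
      ← HahnSeries.order_eq_orderTop_of_ne_zero (term_ne hβ), WithTop.coe_le_coe, ← neg_le_neg_iff,
      neg_order_mul_prod_zpow (ha α hα) hz, neg_order_mul_prod_zpow (ha β hβ) hz]
  obtain ⟨α₀, hα₀⟩ := hA
  obtain ⟨α, hα, β, hβ, hαβ, heq, -, hmax⟩ := exists_ne_map_eq_of_sum_eq_zero (hahnValuation Γ k)
    hsum ⟨α₀, hα₀, (hahnValuation Γ k).ne_zero_iff.mpr (term_ne hα₀)⟩
  refine ⟨α, hα, β, hβ, hαβ, ?_, ?_⟩
  · exact le_antisymm (Finset.le_sup' (fun γ => tropicalTerm a γ _) hα)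
      (Finset.sup'_le _ _ fun γ hγ => (le_iff hγ hα).mp (hmax γ hγ))
  · exact le_antisymm (Finset.le_sup' (fun γ => tropicalTerm a γ _) hβ)
      (Finset.sup'_le _ _ fun γ hγ => (le_iff hγ hβ).mp (heq ▸ hmax γ hγ))

theorem prod_single_mul_zpow (x : ι → Γ) {s : k⟦Γ⟧} (hs : s ≠ 0) (m α : ι → ℤ) :
    ∏ j, (HahnSeries.single (-x j) 1 * s ^ m j) ^ α j =
      HahnSeries.single (-∑ j, α j • x j) 1 * s ^ ∑ j, α j * m j := by
  let t : Multiplicative (Γ × ℤ) →* k⟦Γ⟧ :=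
    { toFun p := HahnSeries.single (-p.toAdd.1) 1 * s ^ p.toAdd.2
      map_one' := by simp
      map_mul' p q := by
        rw [mul_mul_mul_comm, HahnSeries.single_mul_single, mul_one, ← zpow_add₀ hs, ← neg_add]
        rfl }
  calc ∏ j, t (.ofAdd (x j, m j)) ^ α j = t (.ofAdd (∑ j, α j • (x j, m j))) := by
        rw [ofAdd_sum, map_prod]
        simp only [ofAdd_zsmul, map_zpow]
    _ = HahnSeries.single (-∑ j, α j • x j) 1 * s ^ ∑ j, α j * m j := by
        simp only [t, MonoidHom.coe_mk, OneHom.coe_mk, toAdd_ofAdd, Prod.fst_sum, Prod.snd_sum,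
          Prod.smul_fst, Prod.smul_snd, smul_eq_mul]

theorem tropicalHypersurface_subset_valuationImage [DivisibleBy Γ ℤ] [IsAlgClosed k]
    {A : Finset (ι → ℤ)} (hA : A.Nonempty) {a : (ι → ℤ) → k⟦Γ⟧} (ha : ∀ α ∈ A, a α ≠ 0) :
    tropicalHypersurface A hA a ⊆ valuationImage A a := by
  rintro x ⟨α, hα, β, hβ, hαβ, hαM, hβM⟩
  set M := A.sup' hA fun γ => tropicalTerm a γ x
  obtain ⟨m, hm⟩ := exists_injOn_sum_mul A
  let b (γ : ι → ℤ) : k⟦Γ⟧ := a γ * HahnSeries.single (M - ∑ j, γ j • x j) 1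
  have orderTop_b {γ : ι → ℤ} (hγ : γ ∈ A) : (b γ).orderTop = (M - tropicalTerm a γ x : Γ) := by
    rw [HahnSeries.orderTop_mul, HahnSeries.orderTop_single one_ne_zero,
      ← HahnSeries.order_eq_orderTop_of_ne_zero (ha γ hγ), ← WithTop.coe_add, tropicalTerm]
    congr 1
    abel
  obtain ⟨s, hs, hsum⟩ := exists_orderTop_eq_zero_sum_mul_zpow_eq_zero hm (b := b)
    (fun γ hγ => by
      rw [orderTop_b hγ]
      exact WithTop.coe_nonneg.mpr (sub_nonneg.mpr (Finset.le_sup' (tropicalTerm a · x) hγ)))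
    hα hβ hαβ (by rw [orderTop_b hα, hαM, sub_self, WithTop.coe_zero])
    (by rw [orderTop_b hβ, hβM, sub_self, WithTop.coe_zero])
  have hs0 : s ≠ 0 := by rintro rfl; simp at hs
  have single_ne_zero (γ : Γ) : HahnSeries.single γ (1 : k) ≠ 0 :=
    HahnSeries.single_ne_zero one_ne_zero
  refine ⟨fun j => HahnSeries.single (-x j) 1 * s ^ m j,
    fun j => mul_ne_zero (single_ne_zero _) (zpow_ne_zero _ hs0), ?_, fun j => ?_⟩
  · refine (mul_eq_zero.mp ?_).resolve_left (single_ne_zero M)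
    rw [← hsum, Finset.mul_sum]
    refine Finset.sum_congr rfl fun γ _ => ?_
    rw [prod_single_mul_zpow x hs0, ← mul_assoc, ← mul_assoc, mul_comm _ (a γ),
      mul_assoc (a γ), HahnSeries.single_mul_single, mul_one, ← sub_eq_add_neg]
  · have hs_order : s.order = 0 :=
      WithTop.coe_injective ((HahnSeries.order_eq_orderTop_of_ne_zero hs0).trans hs)
    have horder : (s ^ m j).order = 0 := by
      simpa [hs_order] using order_prod_zpow (fun _ : Unit => hs0) fun _ => m j
    rw [HahnSeries.order_mul (single_ne_zero _) (zpow_ne_zero _ hs0), horder, add_zero,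
      HahnSeries.order_single one_ne_zero, neg_neg]

theorem isClosed_tropicalHypersurface [TopologicalSpace Γ] [OrderTopology Γ]
    (A : Finset (ι → ℤ)) (hA : A.Nonempty) (a : (ι → ℤ) → k⟦Γ⟧) :
    IsClosed (tropicalHypersurface A hA a) := by
  have continuous_term (α : ι → ℤ) : Continuous (tropicalTerm a α : (ι → Γ) → Γ) := by
    unfold tropicalTerm
    fun_prop
  have continuous_max : Continuous fun x : ι → Γ => A.sup' hA fun γ => tropicalTerm a γ x :=
    Continuous.finset_sup'_apply hA fun γ _ => continuous_term γ
  have heq : tropicalHypersurface A hA a = ⋃ p ∈ A.offDiag,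
      {x | tropicalTerm a p.1 x = A.sup' hA fun γ => tropicalTerm a γ x} ∩
        {x | tropicalTerm a p.2 x = A.sup' hA fun γ => tropicalTerm a γ x} := by
    ext x
    simp only [tropicalHypersurface, Set.mem_ofPred_eq, Set.mem_iUnion, Finset.mem_offDiag,
      Set.mem_inter_iff, Prod.exists, exists_prop, and_assoc, exists_and_left]
  rw [heq]
  exact isClosed_biUnion_finset fun p _ => (isClosed_eq (continuous_term _) continuous_max).inter
    (isClosed_eq (continuous_term _) continuous_max)

theorem kapranov_tropicalization_general [DivisibleBy Γ ℤ] [IsAlgClosed k] (A : Finset (ι → ℤ))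
    (hA : A.Nonempty) (a : (ι → ℤ) → k⟦Γ⟧) (ha : ∀ α ∈ A, a α ≠ 0) :
    valuationImage A a = tropicalHypersurface A hA a :=
  (valuationImage_subset_tropicalHypersurface hA ha).antisymm
    (tropicalHypersurface_subset_valuationImage hA ha)

end TropicalHypersurface

/-- **Theorem 2.3 (Kapranov).** Over the field `𝕂` of generalized Puiseux (Hahn)
series with real exponents and valuation `val(a) = −min(supp a)`, the closure in
`ℝⁿ` of the image under the coordinatewise valuation of the hypersurface
`{g = 0} ⊆ (𝕂*)ⁿ` equals the tropical hypersurface of `g`: the set of points where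
the maximum `max_{α∈A}(val(a_α) + ⟨α, x⟩)` is attained at least twice. -/
theorem kapranov_tropicalization
    (n : ℕ) (A : Finset (Fin n → ℤ)) (hA : A.Nonempty)
    (a : (Fin n → ℤ) → HahnSeries ℝ ℂ) (ha : ∀ α ∈ A, a α ≠ 0) :
    closure {x : Fin n → ℝ | ∃ z : Fin n → HahnSeries ℝ ℂ,
        (∀ j, z j ≠ 0) ∧ (∑ α ∈ A, a α * ∏ j, z j ^ (α j)) = 0 ∧
        ∀ j, x j = -(z j).order}
      = {x : Fin n → ℝ | ∃ α ∈ A, ∃ β ∈ A, α ≠ β ∧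
          (-(a α).order + ∑ j, (α j : ℝ) * x j
            = A.sup' hA fun γ => -(a γ).order + ∑ j, (γ j : ℝ) * x j) ∧
          (-(a β).order + ∑ j, (β j : ℝ) * x j
            = A.sup' hA fun γ => -(a γ).order + ∑ j, (γ j : ℝ) * x j)} := by
  simpa only [valuationImage, tropicalHypersurface, tropicalTerm, zsmul_eq_mul] using
    (congrArg closure (kapranov_tropicalization_general A hA a ha)).trans
      (isClosed_tropicalHypersurface A hA a).closure_eq
end
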